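/- If β is an isotropic imaginary root (i.e. p(β) = 1) belonging to Σ_λ, then some sequence of admissible reflections sends the pair (λ,β) to a pair (λ',β') in which the support quiver Q' of β' is an extended Dynkin quiver and β' is its minimal positive imaginary root δ; consequently N(λ,β) ≅ N(λ',δ), which is a deformation of the Kleinian singularity of type Q'. -/

import Mathlib

open scoped BigOperators

noncomputable section

/-- A quiver with a finite vertex set `I` and a finite arrow set `A`;
`h a` and `t a` are the head and the tail of the arrow `a`. -/
structure FinQuiver where
  I : Type
  [fintypeI : Fintype I]
  [decEqI : DecidableEq I]
  A : Type
  [fintypeA : Fintype A]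
  h : A → I
  t : A → I

attribute [instance] FinQuiver.fintypeI FinQuiver.decEqI FinQuiver.fintypeA

namespace FinQuiver

variable (Q : FinQuiver)

/-- Arrows of the double quiver `Q̄` : every arrow `a : i → j` of `Q` (as `Sum.inl a`)
together with a reverse arrow `a* : j → i` (as `Sum.inr a`). -/
@[reducible] def DA : Type := Q.A ⊕ Q.A

instance : Fintype Q.DA := inferInstanceAs (Fintype (Q.A ⊕ Q.A))

/-- Head of an arrow of the double quiver. -/
@[reducible] def dh : Q.DA → Q.I := fun a => match a with
  | Sum.inl a => Q.h a
  | Sum.inr a => Q.t a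

/-- Tail of an arrow of the double quiver. -/
@[reducible] def dt : Q.DA → Q.I := fun a => match a with
  | Sum.inl a => Q.t a
  | Sum.inr a => Q.h a

/-- The symmetric bilinear form
`(α,β) = ∑_{i∈I} 2 α_i β_i − ∑_{a∈Q̄} α_{h(a)} β_{t(a)}` on `ℤ^I`. -/
def bil (α β : Q.I → ℤ) : ℤ :=
  (∑ i, 2 * α i * β i) - ∑ a : Q.DA, α (Q.dh a) * β (Q.dt a)

/-- `p(α) = 1 − q(α) = 1 − α·α + ∑_{a ∈ Q} α_{t(a)} α_{h(a)}`. -/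
def pp (α : Q.I → ℤ) : ℤ :=
  1 - (∑ i, α i * α i) + ∑ a : Q.A, α (Q.t a) * α (Q.h a)

/-- The coordinate vector `ε_i` at a vertex `i`. -/
def ev (i : Q.I) : Q.I → ℤ := fun j => if j = i then 1 else 0

/-- The coordinate vector of a vertex, as a vector of natural numbers. -/
def evN (i : Q.I) : Q.I → ℕ := fun j => if j = i then 1 else 0

/-- A vertex is loopfree if no arrow has both its head and its tail there. -/
def Loopfree (i : Q.I) : Prop := ∀ a : Q.A, ¬ (Q.h a = i ∧ Q.t a = i)

/-- The reflection `s_i(α) = α − (α,ε_i) ε_i` at a (loopfree) vertex `i`. -/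
def refl (i : Q.I) (α : Q.I → ℤ) : Q.I → ℤ := α - Q.bil α (Q.ev i) • Q.ev i

/-- Two vertices are joined by some arrow. -/
def Adj (i j : Q.I) : Prop :=
  ∃ a : Q.A, (Q.h a = i ∧ Q.t a = j) ∨ (Q.h a = j ∧ Q.t a = i)

/-- The quiver is connected. -/
def Connected : Prop := ∀ i j : Q.I, Relation.ReflTransGen Q.Adj i j

/-- The support of the vector `α` is connected in `Q`. -/
def SuppConnected (α : Q.I → ℤ) : Prop :=
  ∀ i j : Q.I, α i ≠ 0 → α j ≠ 0 →
    Relation.ReflTransGen (fun x y => α x ≠ 0 ∧ α y ≠ 0 ∧ Q.Adj x y) i j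

/-- The fundamental region: nonzero nonnegative vectors with connected support
such that `(α, ε_i) ≤ 0` for every vertex `i`. -/
def InFund (α : Q.I → ℤ) : Prop :=
  α ≠ 0 ∧ (∀ i, 0 ≤ α i) ∧ Q.SuppConnected α ∧ ∀ i, Q.bil α (Q.ev i) ≤ 0

/-- The roots of the Kac root system attached to `Q` : the real roots form the orbit
of the simple roots (coordinate vectors at loopfree vertices) under the reflections at
loopfree vertices, and the imaginary roots form the orbit of `±(fundamental region)`
under these reflections. -/
inductive IsRoot : (Q.I → ℤ) → Prop
  | simple (i : Q.I) (hi : Q.Loopfree i) : IsRoot (Q.ev i)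
  | fund (α : Q.I → ℤ) (hα : Q.InFund α) : IsRoot α
  | neg_fund (α : Q.I → ℤ) (hα : Q.InFund α) : IsRoot (-α)
  | reflect (i : Q.I) (hi : Q.Loopfree i) (α : Q.I → ℤ) (hα : IsRoot α) :
      IsRoot (Q.refl i α)

/-- Positive roots: roots all of whose components are nonnegative. -/
def IsPosRoot (α : Q.I → ℤ) : Prop := Q.IsRoot α ∧ (∀ i, 0 ≤ α i) ∧ α ≠ 0

/-- The Tits form is positive semidefinite. -/
def PosSemidef : Prop := ∀ α : Q.I → ℤ, 0 ≤ Q.bil α α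

/-- The Tits form is positive definite. -/
def PosDef : Prop := Q.PosSemidef ∧ ∀ α : Q.I → ℤ, Q.bil α α = 0 → α = 0

/-- Dynkin quivers: connected, with positive definite Tits form. -/
def IsDynkin : Prop := Q.Connected ∧ Q.PosDef

/-- Extended Dynkin quivers: connected, with positive semidefinite but not
positive definite Tits form. -/
def IsExtDynkin : Prop := Q.Connected ∧ Q.PosSemidef ∧ ¬ Q.PosDef

/-- `δ` is the minimal positive imaginary root of an extended Dynkin quiver:
the minimal nonzero nonnegative vector in the radical of the Tits form. -/
def IsMinImag (δ : Q.I → ℤ) : Prop :=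
  (∀ i, 0 ≤ δ i) ∧ δ ≠ 0 ∧ (∀ i, Q.bil δ (Q.ev i) = 0) ∧
    ∀ β : Q.I → ℤ, (∀ i, 0 ≤ β i) → β ≠ 0 → (∀ i, Q.bil β (Q.ev i) = 0) →
      ∀ i, δ i ≤ β i

/-- The subquiver of `Q` on a subset `S` of vertices and a subset `B` of arrows. -/
def restrict (S : Set Q.I) (B : Set Q.A) (hh : ∀ a ∈ B, Q.h a ∈ S)
    (ht : ∀ a ∈ B, Q.t a ∈ S) : FinQuiver :=
  { I := S
    fintypeI := Fintype.ofFinite S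
    decEqI := Classical.decEq _
    A := B
    fintypeA := Fintype.ofFinite B
    h := fun a => ⟨Q.h a.1, hh a.1 a.2⟩
    t := fun a => ⟨Q.t a.1, ht a.1 a.2⟩ }

/-- The support quiver of a vector: the full subquiver on the support of `β`. -/
def suppQuiver (β : Q.I → ℤ) : FinQuiver :=
  Q.restrict {i | β i ≠ 0} {a | β (Q.h a) ≠ 0 ∧ β (Q.t a) ≠ 0}
    (fun _ ha => ha.1) (fun _ ha => ha.2)

/-- A dimension vector (of natural numbers), viewed in `ℤ^I`. -/
def toZ (α : Q.I → ℕ) : Q.I → ℤ := fun i => (α i : ℤ)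

/-- An oriented cycle in the double quiver `Q̄`, consisting of `n+1` arrows,
the tail of each arrow being the head of the (cyclically) next one. -/
structure Cyc (Q' : FinQuiver) where
  n : ℕ
  ar : Fin (n + 1) → Q'.DA
  compat : ∀ i : Fin (n + 1), Q'.dt (ar i) = Q'.dh (ar (i + 1))

section WithField

variable (K : Type) [Field K]

/-- `λ·α = ∑_i λ_i α_i`. -/
def pair (l : Q.I → K) (α : Q.I → ℤ) : K := ∑ i, l i * (α i : K)

/-- `R_λ^+`, the set of positive roots `α` with `λ·α = 0`. -/
def Rplus (l : Q.I → K) : Set (Q.I → ℤ) :=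
  {α | Q.IsPosRoot α ∧ Q.pair K l α = 0}

/-- `ℕ R_λ^+`, the set of sums (including the empty sum `0`) of elements of `R_λ^+`. -/
def NRplus (l : Q.I → K) : Set (Q.I → ℤ) :=
  (AddSubmonoid.closure (Q.Rplus K l) : AddSubmonoid (Q.I → ℤ))

/-- `Σ_λ` : the elements `α ∈ R_λ^+` with `p(α) > ∑ p(β⁽ᵗ⁾)` for every decomposition
of `α` as a sum of at least two elements `β⁽ᵗ⁾` of `R_λ^+`. -/
def SigmaSet (l : Q.I → K) : Set (Q.I → ℤ) :=
  {α | α ∈ Q.Rplus K l ∧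
    ∀ (n : ℕ) (β : Fin n → (Q.I → ℤ)), 2 ≤ n → (∀ j, β j ∈ Q.Rplus K l) →
      α = ∑ j, β j → (∑ j, Q.pp (β j)) < Q.pp α}

/-- The dual reflection `r_i(λ)_j = λ_j − (ε_i,ε_j) λ_i`. -/
def coRefl (i : Q.I) (l : Q.I → K) : Q.I → K :=
  fun j => l j - (Q.bil (Q.ev i) (Q.ev j) : ℤ) * l i

/-- A single admissible reflection applied to the pair `(λ, α)`:
a reflection at a loopfree vertex `i` with `λ_i ≠ 0`. -/
def AdmStep (x y : (Q.I → K) × (Q.I → ℤ)) : Prop :=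
  ∃ i : Q.I, Q.Loopfree i ∧ x.1 i ≠ 0 ∧ y.1 = Q.coRefl K i x.1 ∧ y.2 = Q.refl i x.2

/-- `(ν,β)` is obtained from `(λ,α)` by a sequence of admissible reflections:
the two pairs lie in the same class of the equivalence relation generated by
admissible reflections. -/
def AdmEquiv (x y : (Q.I → K) × (Q.I → ℤ)) : Prop :=
  Relation.EqvGen (Q.AdmStep K) x y

/-- The space `Rep(Q̄,α)` of representations of the double quiver. -/
def Rep (α : Q.I → ℕ) : Type :=
  ∀ a : Q.DA, Matrix (Fin (α (Q.dh a))) (Fin (α (Q.dt a))) K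

/-- The moment map
`μ_α(x)_i = ∑_{a∈Q, h(a)=i} x_a x_{a*} − ∑_{a∈Q, t(a)=i} x_{a*} x_a`. -/
def moment (α : Q.I → ℕ) (x : Q.Rep K α) (i : Q.I) :
    Matrix (Fin (α i)) (Fin (α i)) K :=
  (∑ a : Q.A, if h : Q.h a = i then
      (x (Sum.inl a) * x (Sum.inr a)).submatrix
        (Fin.cast (congrArg α h).symm) (Fin.cast (congrArg α h).symm)
    else 0)
  - ∑ a : Q.A, if h : Q.t a = i then
      (x (Sum.inr a) * x (Sum.inl a)).submatrix
        (Fin.cast (congrArg α h).symm) (Fin.cast (congrArg α h).symm)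
    else 0

/-- The fibre `μ_α^{-1}(λ)` of the moment map over (the central element
corresponding to) `λ`. -/
def MomentFiber (l : Q.I → K) (α : Q.I → ℕ) : Set (Q.Rep K α) :=
  {x | ∀ i : Q.I, Q.moment K α x i = l i • (1 : Matrix (Fin (α i)) (Fin (α i)) K)}

/-- The group `∏_i GL(α_i,K)`; it acts on `Rep(Q̄,α)` by conjugation, with the same
orbits and the same invariant functions as `G(α) = (∏_i GL(α_i,K))/K^*`. -/
def Gl (α : Q.I → ℕ) : Type := ∀ i : Q.I, Matrix.GeneralLinearGroup (Fin (α i)) K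

/-- The conjugation action of `∏_i GL(α_i,K)` on `Rep(Q̄,α)`. -/
def glAct (α : Q.I → ℕ) (g : Q.Gl K α) (x : Q.Rep K α) : Q.Rep K α :=
  fun a => (g (Q.dh a) : Matrix (Fin (α (Q.dh a))) (Fin (α (Q.dh a))) K) * x a *
    (((g (Q.dt a))⁻¹ : Matrix.GeneralLinearGroup (Fin (α (Q.dt a))) K) :
      Matrix (Fin (α (Q.dt a))) (Fin (α (Q.dt a))) K)

/-- Coordinates on `Rep(Q̄,α)`: matrix entries. -/
def Coords (α : Q.I → ℕ) : Type :=
  Σ a : Q.DA, Fin (α (Q.dh a)) × Fin (α (Q.dt a))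

/-- The coordinate ring `K[V]` of a subset `V` of `Rep(Q̄,α)` : the algebra of
`K`-valued functions on `V` which are restrictions of polynomial functions. -/
def fnRing (α : Q.I → ℕ) (V : Set (Q.Rep K α)) : Subalgebra K (↥V → K) :=
  (MvPolynomial.aeval
    (fun c : Q.Coords α => fun v : ↥V => v.1 c.1 c.2.1 c.2.2) :
    MvPolynomial (Q.Coords α) K →ₐ[K] (↥V → K)).range

end WithField

end FinQuiver

/-- The subalgebra of functions invariant under a relation (e.g. the orbit
relation of a group action). -/
def relInv (K : Type) [Field K] {V : Type} (R : V → V → Prop) :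
    Subalgebra K (V → K) where
  carrier := {f | ∀ x y : V, R x y → f x = f y}
  mul_mem' := by
    intro f g hf hg x y hxy
    simp only [Pi.mul_apply, hf x y hxy, hg x y hxy]
  one_mem' := fun x y _ => rfl
  add_mem' := by
    intro f g hf hg x y hxy
    simp only [Pi.add_apply, hf x y hxy, hg x y hxy]
  zero_mem' := fun x y _ => rfl
  algebraMap_mem' := fun c x y _ => rfl

namespace FinQuiver

variable (Q : FinQuiver) (K : Type) [Field K]

/-- The coordinate ring of the Marsden–Weinstein reduction
`N(λ,α) = μ_α^{-1}(λ) ⫽ G(α)` : the `G(α)`-invariant functions in the coordinate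
ring of `μ_α^{-1}(λ)`.  Two such reductions are isomorphic as (affine) varieties
exactly when these `K`-algebras are isomorphic. -/
def InvRing (l : Q.I → K) (α : Q.I → ℕ) :
    Subalgebra K (↥(Q.MomentFiber K l α) → K) :=
  Q.fnRing K α (Q.MomentFiber K l α) ⊓
    relInv K (fun x y : ↥(Q.MomentFiber K l α) =>
      ∃ g : Q.Gl K α, y.1 = Q.glAct K α g x.1)

/-- Index type for a product `∏_t X_t^{m_t}`. -/
@[reducible] def SymIdx (s : ℕ) (m : Fin s → ℕ) : Type := Σ t : Fin s, Fin (m t)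

/-- The product `∏_{t} Rep(Q̄, d_t)^{m_t}` of representation spaces. -/
def SymRep (s : ℕ) (m : Fin s → ℕ) (d : Fin s → (Q.I → ℕ)) : Type :=
  ∀ p : SymIdx s m, Q.Rep K (d p.1)

/-- The product `∏_t μ_{d_t}^{-1}(λ)^{m_t}` of moment map fibres. -/
def SymFiber (s : ℕ) (m : Fin s → ℕ) (d : Fin s → (Q.I → ℕ)) (l : Q.I → K) :
    Set (Q.SymRep K s m d) :=
  {x | ∀ p : SymIdx s m, x p ∈ Q.MomentFiber K l (d p.1)}

/-- Polynomial functions on the product of fibres. -/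
def symFnRing (s : ℕ) (m : Fin s → ℕ) (d : Fin s → (Q.I → ℕ)) (l : Q.I → K) :
    Subalgebra K (↥(Q.SymFiber K s m d l) → K) :=
  (MvPolynomial.aeval
    (fun c : Σ p : SymIdx s m, Q.Coords (d p.1) =>
      fun v : ↥(Q.SymFiber K s m d l) => v.1 c.1 c.2.1 c.2.2.1 c.2.2.2) :
    MvPolynomial (Σ p : SymIdx s m, Q.Coords (d p.1)) K →ₐ[K]
      (↥(Q.SymFiber K s m d l) → K)).range

/-- The componentwise action of the product of the groups `∏ GL(d_t)^{m_t}`. -/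
def symGlAct (s : ℕ) (m : Fin s → ℕ) (d : Fin s → (Q.I → ℕ))
    (g : ∀ p : SymIdx s m, Q.Gl K (d p.1)) (x : Q.SymRep K s m d) :
    Q.SymRep K s m d :=
  fun p => Q.glAct K (d p.1) (g p) (x p)

/-- The action of `∏_t S_{m_t}` permuting the factors of each `X_t^{m_t}`. -/
def symPermAct (s : ℕ) (m : Fin s → ℕ) (d : Fin s → (Q.I → ℕ))
    (π : ∀ t : Fin s, Equiv.Perm (Fin (m t))) (x : Q.SymRep K s m d) :
    Q.SymRep K s m d :=
  fun p => x ⟨p.1, π p.1 p.2⟩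

/-- The coordinate ring of the product of symmetric products
`∏_t S^{m_t} N(λ, d_t)` of Marsden–Weinstein reductions: functions on
`∏_t μ_{d_t}^{-1}(λ)^{m_t}` which are polynomial, invariant under all the groups
`G(d_t)` acting on the separate factors, and symmetric under permutations of the
`m_t` factors of each type `t`. -/
def SymInvRing (s : ℕ) (m : Fin s → ℕ) (d : Fin s → (Q.I → ℕ)) (l : Q.I → K) :
    Subalgebra K (↥(Q.SymFiber K s m d l) → K) :=
  Q.symFnRing K s m d l ⊓
    relInv K (fun x y : ↥(Q.SymFiber K s m d l) =>
      ∃ g : ∀ p : SymIdx s m, Q.Gl K (d p.1), y.1 = Q.symGlAct K s m d g x.1) ⊓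
    relInv K (fun x y : ↥(Q.SymFiber K s m d l) =>
      ∃ π : ∀ t : Fin s, Equiv.Perm (Fin (m t)), y.1 = Q.symPermAct K s m d π x.1)

/-- The trace function `tr_p` of an oriented cycle `p` in `Q̄` :
`tr_p(x) = tr(x_{a_1} ⋯ x_{a_ℓ})`, written out via matrix entries. -/
def cycTr (α : Q.I → ℕ) (p : Q.Cyc) (x : Q.Rep K α) : K :=
  ∑ c : ∀ i : Fin (p.n + 1), Fin (α (Q.dh (p.ar i))),
    ∏ i : Fin (p.n + 1),
      x (p.ar i) (c i) (Fin.cast (congrArg α (p.compat i)).symm (c (i + 1)))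

/-- `U` is a subrepresentation of the `Π^λ`-module given by the point
`x ∈ Rep(Q̄,α)` : a collection of subspaces stable under all the maps `x_a`. -/
def SubRep (α : Q.I → ℕ) (x : Q.Rep K α)
    (U : ∀ i : Q.I, Submodule K (Fin (α i) → K)) : Prop :=
  ∀ a : Q.DA, ∀ v ∈ U (Q.dt a), (x a).mulVec v ∈ U (Q.dh a)

/-- The module given by `x` has the simple module `S_{i₀}` (dimension vector
`ε_{i₀}`, all arrows acting as zero) as a composition factor: it has a subquotient
of dimension vector `ε_{i₀}` on which all arrows act as zero. -/
def HasSFactor (α : Q.I → ℕ) (i0 : Q.I) (x : Q.Rep K α) : Prop :=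
  ∃ U W : ∀ i : Q.I, Submodule K (Fin (α i) → K),
    Q.SubRep K α x U ∧ Q.SubRep K α x W ∧ (∀ i, U i ≤ W i) ∧
    (∀ i, Module.finrank K (W i) =
      Module.finrank K (U i) + (if i = i0 then 1 else 0)) ∧
    (∀ a : Q.DA, Q.dh a = i0 → Q.dt a = i0 →
      ∀ v ∈ W (Q.dt a), (x a).mulVec v ∈ U (Q.dh a))

/-- `W/U` is a simple subquotient of the module given by `x`; the simple
subquotients of a module are, up to isomorphism, exactly its composition factors. -/
def SimpleSubquot (α : Q.I → ℕ) (x : Q.Rep K α)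
    (U W : ∀ i : Q.I, Submodule K (Fin (α i) → K)) : Prop :=
  Q.SubRep K α x U ∧ Q.SubRep K α x W ∧ (∀ i, U i ≤ W i) ∧ U ≠ W ∧
    ∀ V : ∀ i : Q.I, Submodule K (Fin (α i) → K),
      Q.SubRep K α x V → (∀ i, U i ≤ V i) → (∀ i, V i ≤ W i) → V = U ∨ V = W

/-- The direct sum map `∏_{j=1}^m Rep(Q̄,δ) → Rep(Q̄,mδ)` (block diagonal). -/
def dsMap (δ : Q.I → ℕ) (m : ℕ) (y : Fin m → Q.Rep K δ) :
    Q.Rep K (fun i => m * δ i) :=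
  fun a => Matrix.of fun r c =>
    if (finProdFinEquiv.symm r).1 = (finProdFinEquiv.symm c).1 then
      y (finProdFinEquiv.symm r).1 a (finProdFinEquiv.symm r).2
        (finProdFinEquiv.symm c).2
    else 0

end FinQuiver

/-!
An admissible reflection at a vertex `i` with `(β, ε_i) > 0` preserves `Σ_λ` and decreases the
height `∑ β_i`, so after finitely many of them `(β, ε_i) ≤ 0` for all `i`; the condition `λ_i ≠ 0`
holds because otherwise `β = s_i β + (β, ε_i) ε_i` would contradict `β ∈ Σ_λ`. At that point
`0 = (β, β) = ∑ β_i (β, ε_i)` forces `β` into the radical of the Tits form of its support, which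
is therefore positive semidefinite with radical of rank one, and `β ∈ Σ_λ` makes `β` indivisible.
That reflections act on roots of constant sign is the geometric representation of a Coxeter group.

On the reductions, collect the arrows at a loopfree vertex `i` into maps `A` out of and `B` into
the vertex space, with `B A = λ_i`, so that `A B` is diagonalizable with eigenvalues `λ_i` and `0`.
The reflection keeps the other arrows and replaces `(A, B)` by a factorization `(A', B')` of
`A B - λ_i`, with `B' A' = -λ_i`. Both factorizations are unique up to the general linear group at
`i`, and by the first fundamental theorem the invariants of this group are generated by the entries
of `A B`, respectively of `A' B' = A B - λ_i`.
-/

section Coxeter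

open CoxeterSystem

variable {B W : Type*} [Group W] {M : CoxeterMatrix B} {cs : CoxeterSystem M W}

theorem isReduced_of_length_mul_wordProd {v : W} {ω : List B}
    (h : cs.length (v * cs.wordProd ω) = cs.length v + ω.length) : cs.IsReduced ω := by
  have := cs.length_mul_le v (cs.wordProd ω)
  exact le_antisymm (cs.length_wordProd_le ω) (by omega)

theorem lt_coxeterMatrix_of_length_mul_alternatingWord {v : W} {i j : B} {k : ℕ}
    (hlen : cs.length (v * cs.wordProd (alternatingWord i j k)) = cs.length v + k)
    (hi : ¬ cs.IsRightDescent (v * cs.wordProd (alternatingWord i j k)) i) (hM : M i j ≠ 0) :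
    k < M i j := by
  by_contra! hk
  rw [cs.not_isRightDescent_iff, mul_assoc, ← cs.wordProd_concat, ← alternatingWord_succ] at hi
  rw [M.symmetric] at hM hk
  refine cs.not_isReduced_alternatingWord j i hM (Nat.lt_succ_of_le hk)
    (isReduced_of_length_mul_wordProd (v := v) ?_)
  rw [hi, hlen, length_alternatingWord, add_assoc]

/-- The factorisation of `w` with respect to the parabolic subgroup generated by `sᵢ` and `sⱼ`. -/
theorem exists_eq_mul_alternatingWord {w : W} {i j : B} (hi : ¬ cs.IsRightDescent w i)
    (hj : cs.IsRightDescent w j) :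
    ∃ (v : W) (k : ℕ), w = v * cs.wordProd (alternatingWord i j k) ∧
      cs.length v < cs.length w ∧ ¬ cs.IsRightDescent v i ∧ ¬ cs.IsRightDescent v j ∧
      (M i j ≠ 0 → k < M i j) := by
  obtain ⟨v, ⟨k, rfl, hlen⟩, hmin⟩ := WellFounded.has_min (measure cs.length).wf
    {v | ∃ k, w = v * cs.wordProd (alternatingWord i j k) ∧ cs.length w = cs.length v + k}
    ⟨w, 0, by simp [alternatingWord]⟩
  have hnext : ¬ cs.IsRightDescent v (if Even k then j else i) := by
    intro hdesc
    refine hmin _ ⟨k + 1, ?_, ?_⟩ hdesc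
    · rw [alternatingWord_succ', cs.wordProd_cons, ← mul_assoc, cs.simple_mul_simple_cancel_right]
    · rw [hlen, ← cs.isRightDescent_iff.1 hdesc]
      ring
  obtain ⟨m, rfl⟩ : ∃ m, k = m + 1 := by
    refine Nat.exists_eq_succ_of_ne_zero fun hk => ?_
    subst hk
    simp only [Even.zero, if_true] at hnext
    simp only [alternatingWord, cs.wordProd_nil, mul_one] at hj
    exact hnext hj
  have hprev : ¬ cs.IsRightDescent v (if Even m then j else i) := by
    intro hdesc
    have := cs.length_mul_le (v * cs.simple (if Even m then j else i))
      (cs.wordProd (alternatingWord i j m))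
    rw [mul_assoc, ← cs.wordProd_cons, ← alternatingWord_succ', hlen] at this
    have hle := cs.length_wordProd_le (alternatingWord i j m)
    rw [length_alternatingWord] at hle
    have := cs.isRightDescent_iff.1 hdesc
    omega
  have hM := lt_coxeterMatrix_of_length_mul_alternatingWord hlen hi
  rcases Nat.even_or_odd m with hm | hm
  · rw [if_neg (Nat.not_even_iff_odd.2 hm.add_one)] at hnext
    rw [if_pos hm] at hprev
    exact ⟨v, m + 1, rfl, by omega, hnext, hprev, hM⟩
  · rw [if_pos hm.add_one] at hnext
    rw [if_neg (Nat.not_even_iff_odd.2 hm)] at hprev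
    exact ⟨v, m + 1, rfl, by omega, hprev, hnext, hM⟩

end Coxeter

/-- A system of simple roots in a lattice with a symmetric integral form: vectors of square `2`
with pairwise nonpositive products. Linear independence is not required. -/
structure SimpleSystem (J M : Type*) [AddCommGroup M] where
  form : LinearMap.BilinForm ℤ M
  form_comm : ∀ x y, form x y = form y x
  root : J → M
  form_root_self : ∀ j, form (root j) (root j) = 2
  form_root_nonpos : ∀ i j, i ≠ j → form (root i) (root j) ≤ 0

namespace SimpleSystem

variable {J M : Type*} [AddCommGroup M] (S : SimpleSystem J M)

/-- The reflection `x ↦ x - (eⱼ, x) eⱼ` in the simple root `eⱼ`. -/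
def reflection (j : J) : M ≃ₗ[ℤ] M := Module.reflection (S.form_root_self j)

theorem reflection_apply (j : J) (x : M) :
    S.reflection j x = x - S.form (S.root j) x • S.root j := rfl

theorem reflection_root_self (j : J) : S.reflection j (S.root j) = -S.root j :=
  Module.reflection_apply_self _

theorem reflection_mul_self (j : J) : S.reflection j * S.reflection j = 1 :=
  LinearEquiv.ext <| Module.involutive_reflection (S.form_root_self j)

theorem form_reflection (j : J) (x y : M) :
    S.form (S.reflection j x) (S.reflection j y) = S.form x y := by
  simp only [reflection_apply, map_sub, map_smul, LinearMap.sub_apply, LinearMap.smul_apply,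
    smul_eq_mul, S.form_root_self, S.form_comm x (S.root j)]
  ring

/-- The Coxeter matrix of a simple system; since the form is integral, two simple reflections
generate a dihedral group of order `4`, `6` or `∞` (encoded as `0`). -/
def coxeterMatrix : CoxeterMatrix J where
  M := Matrix.of fun i j =>
    if S.form (S.root i) (S.root j) = 2 then 1 else
    if S.form (S.root i) (S.root j) = 0 then 2 else
    if S.form (S.root i) (S.root j) = -1 then 3 else 0
  isSymm := Matrix.IsSymm.ext fun i j => by simp only [Matrix.of_apply, S.form_comm (S.root i)]
  diagonal i := by simp [S.form_root_self]
  off_diagonal i j hij := by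
    have := S.form_root_nonpos i j hij
    simp only [Matrix.of_apply]
    split_ifs <;> omega

theorem coxeterMatrix_apply (i j : J) : S.coxeterMatrix i j =
    if S.form (S.root i) (S.root j) = 2 then 1 else
    if S.form (S.root i) (S.root j) = 0 then 2 else
    if S.form (S.root i) (S.root j) = -1 then 3 else 0 := rfl

theorem isLiftable_reflection : S.coxeterMatrix.IsLiftable S.reflection := by
  intro i j
  rcases eq_or_ne i j with rfl | hij
  · rw [reflection_mul_self, one_pow]
  have hnonpos := S.form_root_nonpos i j hij
  have hcomm := S.form_comm (S.root j) (S.root i)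
  rw [coxeterMatrix_apply]
  split_ifs with h2 h0 h1
  · omega
  · ext x
    simp only [pow_succ, pow_zero, one_mul, LinearEquiv.mul_apply, reflection_apply, map_sub,
      map_smul, hcomm, h0, S.form_root_self, LinearEquiv.coe_one, id_eq]
    module
  · ext x
    simp only [pow_succ, pow_zero, one_mul, LinearEquiv.mul_apply, reflection_apply, map_sub,
      map_smul, hcomm, h1, S.form_root_self, LinearEquiv.coe_one, id_eq]
    module
  · exact pow_zero _

/-- The Coxeter group of a simple system. -/
abbrev Weyl : Type _ := S.coxeterMatrix.Group

/-- The Weyl group with its simple generators. -/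
abbrev weylSystem : CoxeterSystem S.coxeterMatrix S.Weyl := S.coxeterMatrix.toCoxeterSystem

/-- The action of the Weyl group on the lattice by products of simple reflections. -/
def weylRep : S.Weyl →* (M ≃ₗ[ℤ] M) := S.weylSystem.lift ⟨S.reflection, S.isLiftable_reflection⟩

theorem weylRep_simple (j : J) : S.weylRep (S.weylSystem.simple j) = S.reflection j :=
  S.weylSystem.lift_apply_simple _ _

theorem weylRep_mul_simple_apply (w : S.Weyl) (j : J) (x : M) :
    S.weylRep (w * S.weylSystem.simple j) x = S.weylRep w (S.reflection j x) := by
  rw [map_mul, LinearEquiv.mul_apply, weylRep_simple]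

theorem weylRep_simple_mul_apply (w : S.Weyl) (j : J) (x : M) :
    S.weylRep (S.weylSystem.simple j * w) x = S.reflection j (S.weylRep w x) := by
  rw [map_mul, LinearEquiv.mul_apply, weylRep_simple]

/-- The cone of nonnegative integral combinations of simple roots. -/
def posCone : AddSubmonoid M := AddSubmonoid.closure (Set.range S.root)

theorem root_mem_posCone (j : J) : S.root j ∈ S.posCone :=
  AddSubmonoid.subset_closure ⟨j, rfl⟩

section Dihedral

open CoxeterSystem

variable {S} {i j : J}

theorem reflection_combination_left (a b : ℤ) :
    S.reflection i (a • S.root i + b • S.root j) =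
      (-a - b * S.form (S.root i) (S.root j)) • S.root i + b • S.root j := by
  simp only [reflection_apply, map_add, map_smul, S.form_root_self]
  module

theorem reflection_combination_right (a b : ℤ) :
    S.reflection j (a • S.root i + b • S.root j) =
      a • S.root i + (-b - a * S.form (S.root i) (S.root j)) • S.root j := by
  rw [add_comm, reflection_combination_left, S.form_comm, add_comm]

/-- In the infinite dihedral case the coefficient of the root reflected last dominates. -/
theorem exists_weylRep_alternatingWord_of_form_le (h : S.form (S.root i) (S.root j) ≤ -2) (k : ℕ) :
    ∃ a b : ℤ, 0 ≤ a ∧ 0 ≤ b ∧ (if Even k then b ≤ a else a ≤ b) ∧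
      S.weylRep (S.weylSystem.wordProd (alternatingWord i j k)) (S.root i) =
        a • S.root i + b • S.root j := by
  induction k with
  | zero => exact ⟨1, 0, by simp [alternatingWord]⟩
  | succ k ih =>
    obtain ⟨a, b, ha, hb, hab, hk⟩ := ih
    rw [alternatingWord_succ', wordProd_cons, weylRep_simple_mul_apply, hk]
    rcases Nat.even_or_odd k with he | ho
    · rw [if_pos he] at hab ⊢
      refine ⟨a, _, ha, ?_, ?_, reflection_combination_right a b⟩
      · nlinarith
      · rw [if_neg (Nat.not_even_iff_odd.2 he.add_one)]
        nlinarith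
    · rw [if_neg (Nat.not_even_iff_odd.2 ho)] at hab ⊢
      refine ⟨_, b, ?_, hb, ?_, reflection_combination_left a b⟩
      · nlinarith
      · rw [if_pos ho.add_one]
        nlinarith

theorem exists_weylRep_alternatingWord (hij : i ≠ j) {k : ℕ}
    (hk : S.coxeterMatrix i j ≠ 0 → k < S.coxeterMatrix i j) :
    ∃ a b : ℤ, 0 ≤ a ∧ 0 ≤ b ∧
      S.weylRep (S.weylSystem.wordProd (alternatingWord i j k)) (S.root i) =
        a • S.root i + b • S.root j := by
  have hnonpos := S.form_root_nonpos i j hij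
  have hone : S.weylRep (S.weylSystem.wordProd (alternatingWord i j 0)) (S.root i) =
      (1 : ℤ) • S.root i + (0 : ℤ) • S.root j := by simp [alternatingWord]
  have hj : S.weylRep (S.weylSystem.wordProd (alternatingWord i j 1)) (S.root i) =
      (1 : ℤ) • S.root i + (-S.form (S.root i) (S.root j)) • S.root j := by
    rw [alternatingWord_succ', wordProd_cons, weylRep_simple_mul_apply, hone, if_pos Even.zero,
      reflection_combination_right]
    simp
  have hi : S.weylRep (S.weylSystem.wordProd (alternatingWord i j 2)) (S.root i) =
      (-1 + S.form (S.root i) (S.root j) * S.form (S.root i) (S.root j)) • S.root i +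
        (-S.form (S.root i) (S.root j)) • S.root j := by
    rw [alternatingWord_succ', wordProd_cons, weylRep_simple_mul_apply, hj, if_neg (by decide),
      reflection_combination_left]
    simp
  rw [coxeterMatrix_apply] at hk
  split_ifs at hk with h2 h0 h1
  · omega
  · obtain rfl | rfl : k = 0 ∨ k = 1 := by have := hk two_ne_zero; omega
    · exact ⟨_, _, zero_le_one, le_rfl, hone⟩
    · exact ⟨_, _, zero_le_one, by omega, hj⟩
  · obtain rfl | rfl | rfl : k = 0 ∨ k = 1 ∨ k = 2 := by have := hk three_ne_zero; omega
    · exact ⟨_, _, zero_le_one, le_rfl, hone⟩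
    · exact ⟨_, _, zero_le_one, by omega, hj⟩
    · exact ⟨_, _, by rw [h1]; norm_num, by omega, hi⟩
  · obtain ⟨a, b, ha, hb, -, h⟩ :=
      exists_weylRep_alternatingWord_of_form_le (by omega : S.form (S.root i) (S.root j) ≤ -2) k
    exact ⟨a, b, ha, hb, h⟩

end Dihedral

section Sign

open CoxeterSystem

variable {S}

theorem weylRep_root_mem_posCone {w : S.Weyl} {i : J}
    (hi : ¬ S.weylSystem.IsRightDescent w i) : S.weylRep w (S.root i) ∈ S.posCone := by
  induction hn : S.weylSystem.length w using Nat.strong_induction_on generalizing w i with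
  | _ n ih =>
  subst hn
  rcases eq_or_ne w 1 with rfl | hw
  · simpa using S.root_mem_posCone i
  obtain ⟨j, hj⟩ := S.weylSystem.exists_rightDescent_of_ne_one hw
  obtain ⟨v, k, rfl, hv, hvi, hvj, hk⟩ := exists_eq_mul_alternatingWord hi hj
  have hij : i ≠ j := fun h => hi (h ▸ hj)
  obtain ⟨a, b, ha, hb, hab⟩ := exists_weylRep_alternatingWord hij hk
  lift a to ℕ using ha
  lift b to ℕ using hb
  simp only [map_mul, LinearEquiv.mul_apply, hab, map_add, natCast_zsmul, map_nsmul]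
  exact add_mem (nsmul_mem (ih _ hv hvi rfl) a) (nsmul_mem (ih _ hv hvj rfl) b)

theorem weylRep_root_mem_posCone_or_neg (w : S.Weyl) (i : J) :
    S.weylRep w (S.root i) ∈ S.posCone ∨ -S.weylRep w (S.root i) ∈ S.posCone := by
  by_cases hi : S.weylSystem.IsRightDescent w i
  · rw [S.weylSystem.isRightDescent_iff_not_isRightDescent_mul] at hi
    have := weylRep_root_mem_posCone hi
    rw [weylRep_mul_simple_apply, reflection_root_self, map_neg] at this
    exact .inr this
  · exact .inl (weylRep_root_mem_posCone hi)

theorem weylRep_sub_mem_posCone {x : M} (hx : ∀ j, S.form (S.root j) x ≤ 0) (w : S.Weyl) :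
    S.weylRep w x - x ∈ S.posCone := by
  induction hn : S.weylSystem.length w generalizing w with
  | zero =>
    rw [S.weylSystem.length_eq_zero_iff] at hn
    simp [hn]
  | succ n ih =>
    have hw : w ≠ 1 := by rintro rfl; simp at hn
    obtain ⟨j, hj⟩ := S.weylSystem.exists_rightDescent_of_ne_one hw
    have hlen := S.weylSystem.isRightDescent_iff.1 hj
    rw [S.weylSystem.isRightDescent_iff_not_isRightDescent_mul] at hj
    set v := w * S.weylSystem.simple j
    obtain ⟨c, hc⟩ := Int.eq_ofNat_of_zero_le (neg_nonneg.2 (hx j))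
    have hwx : S.weylRep w x = S.weylRep v x + c • S.weylRep v (S.root j) := by
      have : w = v * S.weylSystem.simple j := (S.weylSystem.simple_mul_simple_cancel_right j).symm
      rw [this, weylRep_mul_simple_apply, reflection_apply, sub_eq_add_neg, ← neg_smul, hc]
      simp
    rw [hwx, add_sub_right_comm]
    exact add_mem (ih v (by omega)) (nsmul_mem (weylRep_root_mem_posCone hj) c)

end Sign

end SimpleSystem

namespace FinQuiver

variable (Q : FinQuiver)

section TitsForm

theorem bil_comm (α β : Q.I → ℤ) : Q.bil α β = Q.bil β α := by
  refine congrArg₂ (· - ·) (Finset.sum_congr rfl fun i _ => by ring)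
    (Fintype.sum_equiv (Equiv.sumComm Q.A Q.A) _ _ ?_)
  rintro (a | a) <;> exact mul_comm _ _

/-- The Tits form `bil` as a bilinear form on the lattice `ℤ^I`. -/
def titsForm : LinearMap.BilinForm ℤ (Q.I → ℤ) :=
  LinearMap.mk₂ ℤ Q.bil
    (fun α β γ => by
      simp only [bil, Pi.add_apply, mul_add, add_mul, Finset.sum_add_distrib]; ring)
    (fun c α β => by
      simp only [bil, Pi.smul_apply, smul_eq_mul, mul_sub, Finset.mul_sum, mul_assoc,
        mul_left_comm c])
    (fun α β γ => by
      simp only [bil, Pi.add_apply, mul_add, Finset.sum_add_distrib]; ring)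
    (fun c α β => by
      simp only [bil, Pi.smul_apply, smul_eq_mul, mul_sub, Finset.mul_sum, mul_assoc,
        mul_left_comm c])

theorem titsForm_apply (α β : Q.I → ℤ) : Q.titsForm α β = Q.bil α β := rfl

theorem bil_smul_left (c : ℤ) (α β : Q.I → ℤ) : Q.bil (c • α) β = c * Q.bil α β :=
  Q.titsForm.map_smul₂ c α β

theorem bil_smul_right (c : ℤ) (α β : Q.I → ℤ) : Q.bil α (c • β) = c * Q.bil α β :=
  (Q.titsForm α).map_smul c β

theorem ev_eq_single (i : Q.I) : Q.ev i = Pi.single i 1 := by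
  ext j
  rw [ev, Pi.single_apply]

theorem ev_self (i : Q.I) : Q.ev i i = 1 := if_pos rfl

theorem ev_of_ne {i j : Q.I} (h : j ≠ i) : Q.ev i j = 0 := if_neg h

theorem ev_nonneg (i : Q.I) : 0 ≤ Q.ev i := fun j => by
  unfold ev; split_ifs <;> simp

theorem sum_smul_ev (α : Q.I → ℤ) : ∑ j, α j • Q.ev j = α := by
  simp only [ev_eq_single]
  exact (pi_eq_sum_univ' α).symm

theorem bil_eq_sum_mul_bil_ev (α β : Q.I → ℤ) : Q.bil α β = ∑ j, β j * Q.bil α (Q.ev j) := by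
  conv_lhs => rw [← Q.sum_smul_ev β]
  rw [← titsForm_apply, map_sum]
  exact Finset.sum_congr rfl fun j _ => Q.bil_smul_right _ _ _

theorem bil_ev (α : Q.I → ℤ) (i : Q.I) :
    Q.bil α (Q.ev i) = 2 * α i - ∑ a : Q.DA, if Q.dt a = i then α (Q.dh a) else 0 := by
  simp [bil, ev]

variable {Q}

theorem Loopfree.dh_ne {i : Q.I} (hi : Q.Loopfree i) {a : Q.DA} (ha : Q.dt a = i) :
    Q.dh a ≠ i := by
  intro ha'
  rcases a with a | a
  · exact hi a ⟨ha', ha⟩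
  · exact hi a ⟨ha, ha'⟩

theorem bil_ev_self {i : Q.I} (hi : Q.Loopfree i) : Q.bil (Q.ev i) (Q.ev i) = 2 := by
  rw [bil_ev, Finset.sum_eq_zero, ev_self]
  · norm_num
  · intro a _
    split_ifs with ha
    · exact Q.ev_of_ne (hi.dh_ne ha)
    · rfl

theorem bil_ev_nonpos {i j : Q.I} (hij : i ≠ j) : Q.bil (Q.ev i) (Q.ev j) ≤ 0 := by
  rw [bil_ev, Q.ev_of_ne hij.symm, mul_zero, zero_sub, neg_nonpos]
  refine Finset.sum_nonneg fun a _ => ?_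
  split_ifs
  exacts [Q.ev_nonneg _ _, le_rfl]

theorem bil_ev_nonpos_of_not_loopfree {α : Q.I → ℤ} (hα : 0 ≤ α) {i : Q.I}
    (hi : ¬ Q.Loopfree i) : Q.bil α (Q.ev i) ≤ 0 := by
  simp only [Loopfree, not_forall, not_not] at hi
  obtain ⟨a, hh, ht⟩ := hi
  have hnonneg : ∀ b : Q.DA, 0 ≤ if Q.dt b = i then α (Q.dh b) else 0 := fun b => by
    split_ifs
    exacts [hα _, le_rfl]
  have hl := Finset.single_le_sum (fun b _ => hnonneg (Sum.inl b)) (Finset.mem_univ a)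
  have hr := Finset.single_le_sum (fun b _ => hnonneg (Sum.inr b)) (Finset.mem_univ a)
  simp only [hh, ht, if_true] at hl hr
  rw [bil_ev, Fintype.sum_sum_type]
  linarith

variable (Q) in
theorem two_mul_pp (α : Q.I → ℤ) : 2 * Q.pp α = 2 - Q.bil α α := by
  have hsymm : ∑ a : Q.A, α (Q.h a) * α (Q.t a) = ∑ a : Q.A, α (Q.t a) * α (Q.h a) :=
    Finset.sum_congr rfl fun a _ => mul_comm _ _
  simp only [pp, bil, Fintype.sum_sum_type, mul_assoc, ← Finset.mul_sum, hsymm]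
  ring

theorem bil_self_eq_zero_iff {α : Q.I → ℤ} : Q.bil α α = 0 ↔ Q.pp α = 1 := by
  have := Q.two_mul_pp α
  omega

end TitsForm

section Reflections

variable {Q} {i : Q.I}

theorem refl_apply_of_ne {j : Q.I} (hji : j ≠ i) (α : Q.I → ℤ) : Q.refl i α j = α j := by
  simp [refl, ev, hji]

theorem refl_apply_self (i : Q.I) (α : Q.I → ℤ) : Q.refl i α i = α i - Q.bil α (Q.ev i) := by
  simp [refl, ev]

variable (Q) in
/-- The coordinate vectors at loopfree vertices, as simple roots for the Tits form. -/
def simpleSystem : SimpleSystem {i : Q.I // Q.Loopfree i} (Q.I → ℤ) where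
  form := Q.titsForm
  form_comm := Q.bil_comm
  root j := Q.ev j
  form_root_self j := bil_ev_self j.2
  form_root_nonpos _ _ hij := bil_ev_nonpos (Subtype.coe_injective.ne hij)

theorem simpleSystem_reflection (hi : Q.Loopfree i) (α : Q.I → ℤ) :
    Q.simpleSystem.reflection ⟨i, hi⟩ α = Q.refl i α :=
  congrArg (fun c : ℤ => α - c • Q.ev i) (Q.bil_comm _ _)

theorem refl_refl (hi : Q.Loopfree i) (α : Q.I → ℤ) : Q.refl i (Q.refl i α) = α := by
  simp only [← simpleSystem_reflection hi]
  exact LinearEquiv.congr_fun (Q.simpleSystem.reflection_mul_self ⟨i, hi⟩) α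

theorem refl_sum (hi : Q.Loopfree i) {ι : Type*} (s : Finset ι) (f : ι → Q.I → ℤ) :
    Q.refl i (∑ j ∈ s, f j) = ∑ j ∈ s, Q.refl i (f j) := by
  simp only [← simpleSystem_reflection hi, map_sum]

theorem bil_refl_refl (hi : Q.Loopfree i) (α β : Q.I → ℤ) :
    Q.bil (Q.refl i α) (Q.refl i β) = Q.bil α β := by
  simp only [← simpleSystem_reflection hi]
  exact Q.simpleSystem.form_reflection ⟨i, hi⟩ α β

theorem pp_refl (hi : Q.Loopfree i) (α : Q.I → ℤ) : Q.pp (Q.refl i α) = Q.pp α := by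
  have h := Q.two_mul_pp α
  rw [← bil_refl_refl hi α α] at h
  have := Q.two_mul_pp (Q.refl i α)
  omega

theorem bil_weylRep (w : Q.simpleSystem.Weyl) (α β : Q.I → ℤ) :
    Q.bil (Q.simpleSystem.weylRep w α) (Q.simpleSystem.weylRep w β) = Q.bil α β := by
  induction w using Q.simpleSystem.weylSystem.simple_induction_left with
  | one => simp
  | mul_simple_left w j ih =>
    rw [← ih]
    simp only [Q.simpleSystem.weylRep_simple_mul_apply]
    exact Q.simpleSystem.form_reflection j _ _

end Reflections

section Roots

variable {Q} {α φ : Q.I → ℤ}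

theorem nonneg_of_mem_posCone (hα : α ∈ Q.simpleSystem.posCone) : 0 ≤ α := by
  refine (AddSubmonoid.closure_le (S := AddSubmonoid.nonneg (Q.I → ℤ))).2 ?_ hα
  rintro _ ⟨j, rfl⟩
  exact Q.ev_nonneg j

theorem le_weylRep (hα : ∀ i, Q.bil α (Q.ev i) ≤ 0) (w : Q.simpleSystem.Weyl) :
    α ≤ Q.simpleSystem.weylRep w α := by
  have hα' : ∀ j, Q.simpleSystem.form (Q.simpleSystem.root j) α ≤ 0 := fun j =>
    (Q.bil_comm (Q.ev j) α).trans_le (hα j)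
  exact sub_nonneg.1 (nonneg_of_mem_posCone (SimpleSystem.weylRep_sub_mem_posCone hα' w))

theorem InFund.weylRep_nonneg (hφ : Q.InFund φ) (w : Q.simpleSystem.Weyl) :
    0 ≤ Q.simpleSystem.weylRep w φ :=
  le_trans hφ.2.1 (le_weylRep hφ.2.2.2 w)

theorem IsRoot.exists_weylRep (hα : Q.IsRoot α) : ∃ w : Q.simpleSystem.Weyl,
    (∃ j, α = Q.simpleSystem.weylRep w (Q.simpleSystem.root j)) ∨
    ∃ φ, Q.InFund φ ∧
      (α = Q.simpleSystem.weylRep w φ ∨ α = -Q.simpleSystem.weylRep w φ) := by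
  induction hα with
  | simple i hi => exact ⟨1, .inl ⟨⟨i, hi⟩, by rw [map_one]; rfl⟩⟩
  | fund φ hφ => exact ⟨1, .inr ⟨φ, hφ, .inl (by simp)⟩⟩
  | neg_fund φ hφ => exact ⟨1, .inr ⟨φ, hφ, .inr (by simp)⟩⟩
  | reflect i hi α _ ih =>
    obtain ⟨w, h⟩ := ih
    refine ⟨Q.simpleSystem.weylSystem.simple ⟨i, hi⟩ * w, ?_⟩
    simp only [Q.simpleSystem.weylRep_simple_mul_apply, ← simpleSystem_reflection hi]
    rcases h with ⟨j, rfl⟩ | ⟨φ, hφ, rfl | rfl⟩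
    · exact .inl ⟨j, rfl⟩
    · exact .inr ⟨φ, hφ, .inl rfl⟩
    · exact .inr ⟨φ, hφ, .inr (map_neg _ _)⟩

theorem IsRoot.nonneg_or_nonpos (hα : Q.IsRoot α) : 0 ≤ α ∨ α ≤ 0 := by
  obtain ⟨w, ⟨j, rfl⟩ | ⟨φ, hφ, rfl | rfl⟩⟩ := hα.exists_weylRep
  · exact (Q.simpleSystem.weylRep_root_mem_posCone_or_neg w j).imp nonneg_of_mem_posCone
      fun h => neg_nonneg.1 (nonneg_of_mem_posCone h)
  · exact .inl (hφ.weylRep_nonneg w)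
  · exact .inr (neg_nonpos.2 (hφ.weylRep_nonneg w))

theorem IsPosRoot.inFund (hα : Q.IsPosRoot α) (hiso : Q.bil α α = 0)
    (hle : ∀ i, Q.bil α (Q.ev i) ≤ 0) : Q.InFund α := by
  obtain ⟨hroot, hnonneg, hne⟩ := hα
  obtain ⟨w, ⟨j, rfl⟩ | ⟨φ, hφ, rfl | rfl⟩⟩ := hroot.exists_weylRep
  · rw [bil_weylRep] at hiso
    exact absurd (hiso.symm.trans (Q.simpleSystem.form_root_self j)) (by decide)
  · have hinv := le_weylRep hle w⁻¹
    rw [← LinearEquiv.mul_apply, ← map_mul, inv_mul_cancel, map_one] at hinv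
    rwa [le_antisymm hinv (le_weylRep hφ.2.2.2 w)]
  · exact absurd (le_antisymm (neg_nonpos.2 (hφ.weylRep_nonneg w)) hnonneg) hne

theorem IsPosRoot.refl (hα : Q.IsPosRoot α) {i j : Q.I} (hi : Q.Loopfree i) (hji : j ≠ i)
    (hj : α j ≠ 0) : Q.IsPosRoot (Q.refl i α) := by
  have hpos : 0 < Q.refl i α j := by
    rw [refl_apply_of_ne hji]
    exact (hα.2.1 j).lt_of_ne' hj
  have hroot := IsRoot.reflect i hi α hα.1
  refine ⟨hroot, hroot.nonneg_or_nonpos.resolve_right fun h => hpos.not_ge (h j), fun h => ?_⟩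
  rw [h] at hpos
  exact hpos.ne rfl

theorem isPosRoot_ev {i : Q.I} (hi : Q.Loopfree i) : Q.IsPosRoot (Q.ev i) :=
  ⟨.simple i hi, Q.ev_nonneg i, fun h => one_ne_zero ((Q.ev_self i).symm.trans (congrFun h i))⟩

theorem eq_smul_ev {i : Q.I} (h : ∀ j, j ≠ i → α j = 0) : α = α i • Q.ev i := by
  ext j
  rcases eq_or_ne j i with rfl | hji
  · simp [ev_self]
  · simp [ev_of_ne, hji, h]

end Roots

section DimensionVectors

variable {Q} {K : Type} [Field K] {l : Q.I → K} {α : Q.I → ℤ} {i : Q.I}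

theorem pair_sub (l : Q.I → K) (α β : Q.I → ℤ) :
    Q.pair K l (α - β) = Q.pair K l α - Q.pair K l β := by
  simp [pair, mul_sub, Finset.sum_sub_distrib]

theorem pair_smul_ev (l : Q.I → K) (c : ℤ) (i : Q.I) : Q.pair K l (c • Q.ev i) = c * l i := by
  simp [pair, ev, mul_comm]

theorem pair_coRefl (l : Q.I → K) (α : Q.I → ℤ) (i : Q.I) :
    Q.pair K (Q.coRefl K i l) α = Q.pair K l (Q.refl i α) := by
  rw [refl, pair_sub, pair_smul_ev, Q.bil_comm, bil_eq_sum_mul_bil_ev]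
  simp only [pair, coRefl, sub_mul, Finset.sum_sub_distrib, Int.cast_sum, Int.cast_mul,
    Finset.sum_mul]
  exact congrArg _ (Finset.sum_congr rfl fun j _ => by ring)

theorem coRefl_apply_self (hi : Q.Loopfree i) (l : Q.I → K) : Q.coRefl K i l i = -l i := by
  rw [coRefl, bil_ev_self hi]
  push_cast
  ring

theorem coRefl_coRefl (hi : Q.Loopfree i) (l : Q.I → K) :
    Q.coRefl K i (Q.coRefl K i l) = l := by
  ext j
  rw [coRefl, coRefl_apply_self hi, coRefl]
  ring

theorem coRefl_eq_self (hl : l i = 0) : Q.coRefl K i l = l := by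
  ext j
  simp [coRefl, hl]

theorem refl_mem_Rplus (hi : Q.Loopfree i) (hα : α ∈ Q.Rplus K l)
    (hne : ∃ j, j ≠ i ∧ α j ≠ 0) : Q.refl i α ∈ Q.Rplus K (Q.coRefl K i l) := by
  obtain ⟨j, hji, hj⟩ := hne
  exact ⟨hα.1.refl hi hji hj, by rw [pair_coRefl, refl_refl hi, hα.2]⟩

theorem ev_mem_Rplus (hi : Q.Loopfree i) (hl : l i = 0) : Q.ev i ∈ Q.Rplus K l :=
  ⟨isPosRoot_ev hi, by simpa [hl] using pair_smul_ev l 1 i⟩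

theorem refl_mem_Rplus_of_apply_ne_zero [CharZero K] (hi : Q.Loopfree i) (hl : l i ≠ 0)
    (hα : α ∈ Q.Rplus K l) : Q.refl i α ∈ Q.Rplus K (Q.coRefl K i l) := by
  refine refl_mem_Rplus hi hα ?_
  by_contra! h
  have hpair := hα.2
  rw [eq_smul_ev h, pair_smul_ev, mul_eq_zero_iff_right hl, Int.cast_eq_zero] at hpair
  exact hα.1.2.2 (by rw [eq_smul_ev h, hpair, zero_smul])

theorem refl_mem_SigmaSet [CharZero K] (hi : Q.Loopfree i) (hl : l i ≠ 0)
    (hα : α ∈ Q.SigmaSet K l) : Q.refl i α ∈ Q.SigmaSet K (Q.coRefl K i l) := by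
  refine ⟨refl_mem_Rplus_of_apply_ne_zero hi hl hα.1, fun n β hn hβ hsum => ?_⟩
  have hl' : Q.coRefl K i l i ≠ 0 := by rwa [coRefl_apply_self hi, neg_ne_zero]
  have hlt := hα.2 n (fun j => Q.refl i (β j)) hn
    (fun j => by simpa only [coRefl_coRefl hi] using refl_mem_Rplus_of_apply_ne_zero hi hl' (hβ j))
    (by rw [← refl_sum hi, ← hsum, refl_refl hi])
  simpa only [pp_refl hi] using hlt

/-- If `λ_i = 0` then `α = s_i(α) + (α, ε_i) ε_i` is a decomposition in `R_λ^+` with the same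
value of `p`. -/
theorem apply_ne_zero_of_bil_ev_pos (hi : Q.Loopfree i) (hα : α ∈ Q.SigmaSet K l)
    (hiso : Q.bil α α = 0) (hpos : 0 < Q.bil α (Q.ev i)) : l i ≠ 0 := by
  intro hl
  have hne : ∃ j, j ≠ i ∧ α j ≠ 0 := by
    by_contra! h
    rw [Q.bil_eq_sum_mul_bil_ev, Finset.sum_eq_single i (fun j _ hj => by simp [h j hj]) (by simp),
      mul_eq_zero_iff_right hpos.ne'] at hiso
    exact hα.1.1.2.2 (by rw [eq_smul_ev h, hiso, zero_smul])
  have hrefl := refl_mem_Rplus hi hα.1 hne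
  rw [coRefl_eq_self hl] at hrefl
  obtain ⟨m, hm⟩ := Int.eq_ofNat_of_zero_le hpos.le
  have hsum : α = ∑ k, Fin.cons (α := fun _ : Fin (m + 1) => Q.I → ℤ)
      (Q.refl i α) (fun _ => Q.ev i) k := by
    simp [Fin.sum_univ_succ, refl, hm]
  have hlt := hα.2 (m + 1) (Fin.cons (Q.refl i α) fun _ => Q.ev i) (by omega)
    (Fin.cases hrefl fun _ => ev_mem_Rplus hi hl) hsum
  have hpp : Q.pp (Q.ev i) = 0 := by
    have := Q.two_mul_pp (Q.ev i)
    rw [bil_ev_self hi] at this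
    omega
  simp [Fin.sum_univ_succ, pp_refl hi, hpp] at hlt

end DimensionVectors

end FinQuiver

namespace FinQuiver

section Radical

variable {Q : FinQuiver} {δ : Q.I → ℤ}

/-- Completing squares: `2 α_i² = (α_i² / δ_i) ∑_{t(a) = i} δ_{h(a)}` since `δ` is radical. -/
theorem bil_self_eq_sum_sq (hpos : ∀ i, 0 < δ i) (hrad : ∀ i, Q.bil δ (Q.ev i) = 0)
    (α : Q.I → ℤ) : (Q.bil α α : ℚ) = ∑ a : Q.A, (δ (Q.h a) : ℚ) * δ (Q.t a) *
      ((α (Q.h a) : ℚ) / δ (Q.h a) - (α (Q.t a) : ℚ) / δ (Q.t a)) ^ 2 := by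
  have hne : ∀ i, (δ i : ℚ) ≠ 0 := fun i => by exact_mod_cast (hpos i).ne'
  have hnbr : ∀ i, 2 * (δ i : ℚ) = ∑ a : Q.DA, if Q.dt a = i then (δ (Q.dh a) : ℚ) else 0 := by
    intro i
    have h := hrad i
    rw [bil_ev, sub_eq_zero] at h
    exact_mod_cast h
  have hdiag : ∑ i, 2 * (α i : ℚ) * α i =
      ∑ a : Q.DA, (α (Q.dt a) : ℚ) ^ 2 / δ (Q.dt a) * δ (Q.dh a) := by
    calc ∑ i, 2 * (α i : ℚ) * α i
        = ∑ i, (α i : ℚ) ^ 2 / δ i * (2 * δ i) :=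
          Finset.sum_congr rfl fun i _ => by have := hne i; field_simp
      _ = ∑ i, ∑ a : Q.DA, if Q.dt a = i then (α i : ℚ) ^ 2 / δ i * δ (Q.dh a) else 0 := by
          simp only [hnbr, Finset.mul_sum, mul_ite, mul_zero]
      _ = _ := by
          rw [Finset.sum_comm]
          simp only [Finset.sum_ite_eq, Finset.mem_univ, if_true]
  rw [bil]
  push_cast
  rw [hdiag, ← Finset.sum_sub_distrib, Fintype.sum_sum_type, ← Finset.sum_add_distrib]
  refine Finset.sum_congr rfl fun a _ => ?_
  have hh := hne (Q.h a)
  have ht := hne (Q.t a)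
  simp only [dh, dt]
  field_simp
  ring

theorem posSemidef_of_radical (hpos : ∀ i, 0 < δ i) (hrad : ∀ i, Q.bil δ (Q.ev i) = 0) :
    Q.PosSemidef := by
  intro α
  have hpos' : ∀ i, (0 : ℚ) < δ i := fun i => by exact_mod_cast hpos i
  have h : (0 : ℚ) ≤ Q.bil α α := by
    rw [bil_self_eq_sum_sq hpos hrad]
    exact Finset.sum_nonneg fun a _ =>
      mul_nonneg (mul_pos (hpos' _) (hpos' _)).le (sq_nonneg _)
  exact_mod_cast h

theorem mul_eq_mul_of_radical (hconn : Q.Connected) (hpos : ∀ i, 0 < δ i)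
    (hrad : ∀ i, Q.bil δ (Q.ev i) = 0) {γ : Q.I → ℤ} (hγ : ∀ i, Q.bil γ (Q.ev i) = 0)
    (i j : Q.I) : γ i * δ j = γ j * δ i := by
  have hpos' : ∀ i, (0 : ℚ) < δ i := fun i => by exact_mod_cast hpos i
  have hsum := bil_self_eq_sum_sq hpos hrad γ
  have hself : Q.bil γ γ = 0 := by
    simp only [bil_eq_sum_mul_bil_ev _ γ γ, hγ, mul_zero, Finset.sum_const_zero]
  rw [hself, Int.cast_zero, eq_comm, Finset.sum_eq_zero_iff_of_nonneg fun a _ =>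
    mul_nonneg (mul_pos (hpos' _) (hpos' _)).le (sq_nonneg _)] at hsum
  have harrow : ∀ a : Q.A, (γ (Q.h a) : ℚ) / δ (Q.h a) = (γ (Q.t a) : ℚ) / δ (Q.t a) := by
    intro a
    have h := hsum a (Finset.mem_univ a)
    rwa [mul_eq_zero_iff_left (mul_pos (hpos' _) (hpos' _)).ne', sq_eq_zero_iff, sub_eq_zero] at h
  have hratio : (γ i : ℚ) / δ i = (γ j : ℚ) / δ j := by
    induction hconn i j with
    | refl => rfl
    | tail _ hadj ih =>
      rw [ih]
      obtain ⟨a, ⟨rfl, rfl⟩ | ⟨rfl, rfl⟩⟩ := hadj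
      exacts [harrow a, (harrow a).symm]
  rw [div_eq_div_iff (hpos' i).ne' (hpos' j).ne'] at hratio
  exact_mod_cast hratio

theorem isExtDynkin_of_radical (hconn : Q.Connected) (hpos : ∀ i, 0 < δ i)
    (hrad : ∀ i, Q.bil δ (Q.ev i) = 0) (hne : δ ≠ 0) : Q.IsExtDynkin :=
  ⟨hconn, posSemidef_of_radical hpos hrad, fun hpd =>
    hne (hpd.2 δ (by simp only [bil_eq_sum_mul_bil_ev _ δ δ, hrad, mul_zero,
      Finset.sum_const_zero]))⟩

theorem isMinImag_of_gcd_eq_one (hconn : Q.Connected) (hpos : ∀ i, 0 < δ i)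
    (hrad : ∀ i, Q.bil δ (Q.ev i) = 0) (hgcd : Finset.univ.gcd δ = 1) : Q.IsMinImag δ := by
  refine ⟨fun i => (hpos i).le, ?_, hrad, fun γ hγ hγne hγrad i => ?_⟩
  · rintro rfl
    exact zero_ne_one ((Finset.gcd_eq_zero_iff.2 fun _ _ => rfl).symm.trans hgcd)
  · have hprop := mul_eq_mul_of_radical hconn hpos hrad hγrad
    have hdvd : δ i ∣ γ i := by
      have h : δ i ∣ Finset.univ.gcd fun j => γ i * δ j :=
        Finset.dvd_gcd fun j _ => ⟨γ j, (hprop i j).trans (mul_comm _ _)⟩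
      rwa [Finset.gcd_mul_left, hgcd, mul_one, dvd_normalize_iff] at h
    obtain ⟨j, hj⟩ := Function.ne_iff.1 hγne
    have hne : γ i ≠ 0 := fun h0 => mul_ne_zero hj (hpos i).ne' (by rw [← hprop i j, h0, zero_mul])
    exact Int.le_of_dvd ((hγ i).lt_of_ne' hne) hdvd

end Radical

section Support

variable {Q : FinQuiver} {β : Q.I → ℤ}

theorem bil_ev_suppQuiver (i : (Q.suppQuiver β).I) :
    (Q.suppQuiver β).bil (fun j => β j.1) ((Q.suppQuiver β).ev i) = Q.bil β (Q.ev i.1) := by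
  rw [bil_ev, bil_ev]
  congr 1
  refine Fintype.sum_of_injective (fun a : (Q.suppQuiver β).DA => a.map Subtype.val Subtype.val)
    (Subtype.val_injective.sumMap Subtype.val_injective) _ _ ?_ ?_
  · intro a ha
    rw [ite_eq_right_iff]
    intro hi
    by_contra hβ
    have hi' : β (Q.dt a) ≠ 0 := hi ▸ i.2
    rcases a with a | a
    · exact ha ⟨.inl ⟨a, hβ, hi'⟩, rfl⟩
    · exact ha ⟨.inr ⟨a, hi', hβ⟩, rfl⟩
  · rintro (a | a) <;> exact if_congr Subtype.ext_iff rfl rfl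

theorem SuppConnected.connected (h : Q.SuppConnected β) : (Q.suppQuiver β).Connected := by
  intro i j
  have hlift : ∀ k, Relation.ReflTransGen (fun x y => β x ≠ 0 ∧ β y ≠ 0 ∧ Q.Adj x y) i.1 k →
      ∀ hk : β k ≠ 0, Relation.ReflTransGen (Q.suppQuiver β).Adj i ⟨k, hk⟩ := by
    intro k hpath
    induction hpath with
    | refl => exact fun _ => .refl
    | tail _ hadj ih =>
      obtain ⟨hb, hc, a, ⟨rfl, rfl⟩ | ⟨rfl, rfl⟩⟩ := hadj
      · exact fun _ => (ih hb).tail ⟨⟨a, hb, hc⟩, .inl ⟨rfl, rfl⟩⟩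
      · exact fun _ => (ih hb).tail ⟨⟨a, hc, hb⟩, .inr ⟨rfl, rfl⟩⟩
  exact hlift j.1 (h i.1 j.1 i.2 j.2) j.2

theorem bil_ev_eq_zero_of_isotropic (hβ : 0 ≤ β) (hle : ∀ i, Q.bil β (Q.ev i) ≤ 0)
    (hiso : Q.bil β β = 0) {i : Q.I} (hi : β i ≠ 0) : Q.bil β (Q.ev i) = 0 := by
  rw [bil_eq_sum_mul_bil_ev, Finset.sum_eq_zero_iff_of_nonpos fun j _ =>
    mul_nonpos_of_nonneg_of_nonpos (hβ j) (hle j)] at hiso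
  exact (mul_eq_zero_iff_left hi).1 (hiso i (Finset.mem_univ i))

theorem InFund.of_smul {y : ℤ} {η : Q.I → ℤ} (hy : 0 < y) (h : Q.InFund (y • η)) :
    Q.InFund η := by
  obtain ⟨hne, hnonneg, hconn, hle⟩ := h
  refine ⟨right_ne_zero_of_smul hne, fun i => nonneg_of_mul_nonneg_right (hnonneg i) hy, ?_,
    fun i => ?_⟩
  · simpa only [SuppConnected, Pi.smul_apply, smul_ne_zero_iff_right hy.ne'] using hconn
  · have h := hle i
    rw [bil_smul_left] at h
    exact nonpos_of_mul_nonpos_right h hy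

variable {K : Type} [Field K] [CharZero K] {l : Q.I → K}

/-- Otherwise `β` is the sum of `y ≥ 2` copies of the isotropic root `β / y`, and `y > p(β) = 1`. -/
theorem eq_one_of_forall_dvd (hβ : β ∈ Q.SigmaSet K l) (hfund : Q.InFund β)
    (hiso : Q.bil β β = 0) {y : ℕ} (hy : 0 < y) (hdvd : ∀ i, (y : ℤ) ∣ β i) : y = 1 := by
  choose η hη using hdvd
  obtain rfl : β = (y : ℤ) • η := funext hη
  have hy' : (y : ℤ) ≠ 0 := by exact_mod_cast hy.ne'
  have hηfund : Q.InFund η := hfund.of_smul (by exact_mod_cast hy)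
  have hηpair : Q.pair K l η = 0 := by
    have h := hβ.1.2
    simp only [pair, Pi.smul_apply, smul_eq_mul, Int.cast_mul, mul_left_comm _ (((y : ℤ)) : K),
      ← Finset.mul_sum] at h
    exact (mul_eq_zero_iff_left (by exact_mod_cast hy')).1 h
  have hηpp : Q.pp η = 1 := by
    rw [bil_smul_left, bil_smul_right] at hiso
    exact bil_self_eq_zero_iff.1
      ((mul_eq_zero_iff_left hy').1 ((mul_eq_zero_iff_left hy').1 hiso))
  by_contra hy1
  have hlt := hβ.2 y (fun _ => η) (by omega)
    (fun _ => ⟨⟨.fund η hηfund, hηfund.2.1, hηfund.1⟩, hηpair⟩) (by simp)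
  rw [bil_self_eq_zero_iff.1 hiso] at hlt
  simp only [hηpp, Finset.sum_const, Finset.card_univ, Fintype.card_fin, nsmul_eq_mul,
    mul_one] at hlt
  omega

theorem isExtDynkin_and_isMinImag_suppQuiver (hβ : β ∈ Q.SigmaSet K l)
    (hiso : Q.bil β β = 0) (hle : ∀ i, Q.bil β (Q.ev i) ≤ 0) :
    (Q.suppQuiver β).IsExtDynkin ∧ (Q.suppQuiver β).IsMinImag (fun i => β i.1) := by
  have hnonneg := hβ.1.1.2.1
  have hfund := hβ.1.1.inFund hiso hle
  obtain ⟨i₀, hi₀⟩ := Function.ne_iff.1 hfund.1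
  have hconn := hfund.2.2.1.connected
  have hpos : ∀ i : (Q.suppQuiver β).I, 0 < β i.1 := fun i => (hnonneg i.1).lt_of_ne' i.2
  have hrad (i) : (Q.suppQuiver β).bil (fun i => β i.1) ((Q.suppQuiver β).ev i) = 0 := by
    rw [bil_ev_suppQuiver]
    exact bil_ev_eq_zero_of_isotropic hnonneg hle hiso i.2
  refine ⟨isExtDynkin_of_radical hconn hpos hrad fun h => hi₀ (congrFun h ⟨i₀, hi₀⟩),
    isMinImag_of_gcd_eq_one hconn hpos hrad ?_⟩
  obtain ⟨y, hy⟩ : ∃ y : ℕ, (Finset.univ.gcd fun i : (Q.suppQuiver β).I => β i.1) = y :=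
    Int.eq_ofNat_of_zero_le (Int.nonneg_of_normalize_eq_self Finset.normalize_gcd)
  have hy0 : 0 < y := by
    refine Nat.pos_of_ne_zero fun h0 => hi₀ ?_
    rw [h0, Nat.cast_zero, Finset.gcd_eq_zero_iff] at hy
    exact hy ⟨i₀, hi₀⟩ (Finset.mem_univ _)
  have hdvd : ∀ i, (y : ℤ) ∣ β i := fun i => by
    by_cases hi : β i = 0
    · exact hi ▸ dvd_zero _
    · exact hy ▸ Finset.gcd_dvd (f := fun i : (Q.suppQuiver β).I => β i.1) (b := ⟨i, hi⟩)
        (Finset.mem_univ _)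
  rw [hy, eq_one_of_forall_dvd hβ hfund hiso hy0 hdvd, Nat.cast_one]

end Support

end FinQuiver

section Correspondence

open Relator

variable {K X Y : Type} [Field K] {Γ : X → Y → Prop}

theorem nonempty_algEquiv_of_biTotal {S : Subalgebra K (X → K)} {S' : Subalgebra K (Y → K)}
    (hΓ : BiTotal Γ) (h : ∀ f ∈ S, ∃ f' ∈ S', (Γ ⇒ Eq) f f')
    (h' : ∀ f' ∈ S', ∃ f ∈ S, (Γ ⇒ Eq) f f') : Nonempty (S ≃ₐ[K] S') := by
  let φ : S →ₐ[K] ({z : X × Y // Γ z.1 z.2} → K) :=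
    (AlgHom.pi fun z => Pi.evalAlgHom K (fun _ : X => K) z.1.1).comp S.val
  let ψ : S' →ₐ[K] ({z : X × Y // Γ z.1 z.2} → K) :=
    (AlgHom.pi fun z => Pi.evalAlgHom K (fun _ : Y => K) z.1.2).comp S'.val
  have hφ : Function.Injective φ := fun f g hfg => Subtype.ext <| funext fun x =>
    let ⟨y, hxy⟩ := hΓ.1 x
    congrFun hfg ⟨(x, y), hxy⟩
  have hψ : Function.Injective ψ := fun f g hfg => Subtype.ext <| funext fun y =>
    let ⟨x, hxy⟩ := hΓ.2 y
    congrFun hfg ⟨(x, y), hxy⟩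
  have hrange : φ.range = ψ.range := by
    refine le_antisymm ?_ ?_
    · rintro _ ⟨f, rfl⟩
      obtain ⟨f', hf', hff'⟩ := h f f.2
      exact ⟨⟨f', hf'⟩, funext fun z => (hff' z.2).symm⟩
    · rintro _ ⟨f', rfl⟩
      obtain ⟨f, hf, hff'⟩ := h' f' f'.2
      exact ⟨⟨f, hf⟩, funext fun z => hff' z.2⟩
  exact ⟨(AlgEquiv.ofInjective φ hφ).trans
    ((Subalgebra.equivOfEq _ _ hrange).trans (AlgEquiv.ofInjective ψ hψ).symm)⟩

theorem exists_liftFun_of_mem_adjoin {G : Set (X → K)} {S' : Subalgebra K (Y → K)}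
    (h : ∀ g ∈ G, ∃ g' ∈ S', (Γ ⇒ Eq) g g') {f : X → K} (hf : f ∈ Algebra.adjoin K G) :
    ∃ f' ∈ S', (Γ ⇒ Eq) f f' := by
  induction hf using Algebra.adjoin_induction with
  | mem g hg => exact h g hg
  | algebraMap c => exact ⟨algebraMap K _ c, S'.algebraMap_mem c, fun _ _ _ => rfl⟩
  | add f g _ _ hf hg =>
    obtain ⟨f', hf', hff'⟩ := hf
    obtain ⟨g', hg', hgg'⟩ := hg
    exact ⟨f' + g', S'.add_mem hf' hg', fun x y hxy => congrArg₂ (· + ·) (hff' hxy) (hgg' hxy)⟩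
  | mul f g _ _ hf hg =>
    obtain ⟨f', hf', hff'⟩ := hf
    obtain ⟨g', hg', hgg'⟩ := hg
    exact ⟨f' * g', S'.mul_mem hf' hg', fun x y hxy => congrArg₂ (· * ·) (hff' hxy) (hgg' hxy)⟩

theorem mem_relInv_of_liftFun {R : X → X → Prop} {R' : Y → Y → Prop}
    (hR : ∀ y y', R' y y' → ∃ x x', Γ x y ∧ Γ x' y' ∧ R x x')
    {f : X → K} (hf : f ∈ relInv K R) {f' : Y → K} (h : (Γ ⇒ Eq) f f') : f' ∈ relInv K R' := by
  intro y y' hy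
  obtain ⟨x, x', hxy, hxy', hx⟩ := hR y y' hy
  rw [← h hxy, ← h hxy']
  exact hf x x' hx

theorem nonempty_algEquiv_inf_relInv {S : Subalgebra K (X → K)} {S' : Subalgebra K (Y → K)}
    {R : X → X → Prop} {R' : Y → Y → Prop} (hΓ : BiTotal Γ)
    (h : ∀ f ∈ S ⊓ relInv K R, ∃ f' ∈ S', (Γ ⇒ Eq) f f')
    (h' : ∀ f' ∈ S' ⊓ relInv K R', ∃ f ∈ S, (Γ ⇒ Eq) f f')
    (hR : ∀ x x', R x x' → ∃ y y', Γ x y ∧ Γ x' y' ∧ R' y y')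
    (hR' : ∀ y y', R' y y' → ∃ x x', Γ x y ∧ Γ x' y' ∧ R x x') :
    Nonempty (↥(S ⊓ relInv K R) ≃ₐ[K] ↥(S' ⊓ relInv K R')) := by
  refine nonempty_algEquiv_of_biTotal hΓ (fun f hf => ?_) fun f' hf' => ?_
  · obtain ⟨f', hf', hff'⟩ := h f hf
    exact ⟨f', ⟨hf', mem_relInv_of_liftFun hR' hf.2 hff'⟩, hff'⟩
  · obtain ⟨f, hf, hff'⟩ := h' f' hf'
    exact ⟨f, ⟨hf, mem_relInv_of_liftFun (Γ := flip Γ) hR hf'.2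
      fun y x hxy => (hff' hxy).symm⟩, hff'⟩

theorem nonempty_algEquiv_adjoin_inf_relInv {G : Set (X → K)} {G' : Set (Y → K)}
    {R : X → X → Prop} {R' : Y → Y → Prop} (φ : X ≃ Y)
    (hG : ∀ g ∈ G, g ∘ φ.symm ∈ Algebra.adjoin K G')
    (hG' : ∀ g ∈ G', g ∘ φ ∈ Algebra.adjoin K G) (hR : ∀ x x', R x x' ↔ R' (φ x) (φ x')) :
    Nonempty (↥(Algebra.adjoin K G ⊓ relInv K R) ≃ₐ[K] ↥(Algebra.adjoin K G' ⊓ relInv K R')) := by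
  refine nonempty_algEquiv_inf_relInv (Γ := fun x y => φ x = y)
    ⟨fun x => ⟨φ x, rfl⟩, fun y => ⟨φ.symm y, φ.apply_symm_apply y⟩⟩ (fun f hf => ?_)
    (fun f' hf' => ?_) (fun x x' hx => ⟨φ x, φ x', rfl, rfl, (hR x x').1 hx⟩) fun y y' hy =>
      ⟨φ.symm y, φ.symm y', φ.apply_symm_apply y, φ.apply_symm_apply y', (hR _ _).2 <| by
        rwa [φ.apply_symm_apply, φ.apply_symm_apply]⟩
  · exact exists_liftFun_of_mem_adjoin (fun g hg => ⟨g ∘ φ.symm, hG g hg, fun x y hxy => by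
      rw [Function.comp_apply, ← hxy, φ.symm_apply_apply]⟩) hf.1
  · obtain ⟨f, hf, h⟩ := exists_liftFun_of_mem_adjoin (Γ := fun y x => φ x = y)
      (fun g hg => ⟨g ∘ φ, hG' g hg, fun y x hxy => by rw [Function.comp_apply, hxy]⟩) hf'.1
    exact ⟨f, hf, fun x y hxy => (h hxy).symm⟩

end Correspondence

section MatrixEntries

variable {K X l m n : Type*} [CommRing K] {R : Subalgebra K (X → K)}

theorem mul_apply_mem [Fintype m] {A : X → Matrix l m K} {B : X → Matrix m n K}
    (hA : ∀ i j, (fun x => A x i j) ∈ R) (hB : ∀ j k, (fun x => B x j k) ∈ R) (i : l) (k : n) :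
    (fun x => (A x * B x) i k) ∈ R := by
  have heq : (fun x => (A x * B x) i k) = ∑ j, (fun x => A x i j) * fun x => B x j k := by
    ext x
    simp [Matrix.mul_apply]
  exact heq ▸ R.sum_mem fun j _ => R.mul_mem (hA i j) (hB j k)

variable [Fintype n] [DecidableEq n] {M : X → Matrix n n K}

theorem det_mem (hM : ∀ i j, (fun x => M x i j) ∈ R) : (fun x => (M x).det) ∈ R := by
  have heq : (fun x => (M x).det) =
      ∑ σ : Equiv.Perm n, ((Equiv.Perm.sign σ : ℤ) • ∏ i, fun x => M x (σ i) i) := by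
    ext x
    simp [Matrix.det_apply, Units.smul_def]
  exact heq ▸ R.sum_mem fun σ _ => zsmul_mem (R.prod_mem fun i _ => hM (σ i) i) _

theorem adjugate_apply_mem (hM : ∀ i j, (fun x => M x i j) ∈ R) (i j : n) :
    (fun x => (M x).adjugate i j) ∈ R := by
  simp only [Matrix.adjugate_apply]
  refine det_mem fun k k' => ?_
  by_cases hk : k = j
  · subst hk
    simp only [Matrix.updateRow_self]
    exact R.algebraMap_mem (Pi.single (M := fun _ => K) i 1 k')
  · simpa only [Matrix.updateRow_ne hk] using hM k k'

end MatrixEntries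

section PrincipalMinors

open Equiv

variable {R D n : Type*} [CommRing R] [Fintype n] [DecidableEq n]

theorem det_smul_eq_mul_adjugate {A C : Matrix D n R} (B : Matrix n D R) {S : n → D}
    (hC : C * A.submatrix S id = A) :
    ((A * B).submatrix S S).det • C =
      (A * B).submatrix id S * ((A * B).submatrix S S).adjugate := by
  set P := A.submatrix S id
  set P' := B.submatrix id S
  have hAB : (A * B).submatrix S S = P * P' :=
    Matrix.submatrix_mul _ _ S id S Function.bijective_id
  calc ((A * B).submatrix S S).det • C = P'.det • (C * (P * P.adjugate)) := by
        rw [hAB, Matrix.det_mul, Matrix.mul_adjugate, Matrix.mul_smul, Matrix.mul_one, smul_smul,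
          mul_comm]
    _ = A * (P' * P'.adjugate) * P.adjugate := by
        rw [← Matrix.mul_assoc C P, hC, Matrix.mul_adjugate P', Matrix.mul_smul, Matrix.mul_one,
          Matrix.smul_mul]
    _ = (A * B).submatrix id S * ((A * B).submatrix S S).adjugate := by
        rw [hAB, Matrix.adjugate_mul_distrib,
          Matrix.submatrix_mul _ _ id id S Function.bijective_id, Matrix.submatrix_id_id,
          Matrix.mul_assoc, Matrix.mul_assoc, Matrix.mul_assoc]

variable [Fintype D]

theorem det_mul_eq_sum_prod_mul_det_submatrix (A : Matrix D n R) (B : Matrix n D R) :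
    (B * A).det = ∑ S : n → D, (∏ i, A (S i) i) * (B.submatrix id S).det := by
  classical
  simp only [Matrix.det_apply', Matrix.mul_apply, Finset.prod_univ_sum, Finset.mul_sum,
    Fintype.piFinset_univ]
  rw [Finset.sum_comm]
  refine Finset.sum_congr rfl fun S _ => Finset.sum_congr rfl fun σ _ => ?_
  rw [Finset.prod_mul_distrib]
  simp only [Matrix.submatrix_apply, id]
  ring

theorem det_mul_eq_sum_perm_prod_mul_det_submatrix (A : Matrix D n R) (B : Matrix n D R)
    (τ : Perm n) : (B * A).det =
      ∑ S : n → D, ((τ.sign : ℤ) : R) * (∏ i, A (S (τ i)) i) * (B.submatrix id S).det := by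
  rw [det_mul_eq_sum_prod_mul_det_submatrix]
  refine Fintype.sum_equiv (Equiv.arrowCongr τ (Equiv.refl D)) _ _ fun S => ?_
  have hsub : B.submatrix id (arrowCongr τ (Equiv.refl D) S) =
      (B.submatrix id S).submatrix id τ.symm := rfl
  have hsign : ((τ.sign : ℤ) : R) * ((τ.sign : ℤ) : R) = 1 := by
    rw [← Int.cast_mul, ← Units.val_mul, Int.units_mul_self, Units.val_one, Int.cast_one]
  simp only [hsub, Matrix.det_permute', arrowCongr_apply, coe_refl, Function.comp_apply,
    symm_apply_apply, id_eq, Perm.sign_symm]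
  linear_combination (-(∏ i, A (S i) i) * (B.submatrix id S).det) * hsign

/-- The Cauchy–Binet formula, summed over all maps `n → D` rather than over subsets of `D`. -/
theorem sum_det_submatrix_mul (A : Matrix D n R) (B : Matrix n D R) :
    ∑ S : n → D, ((A * B).submatrix S S).det = ((Fintype.card n).factorial : R) * (B * A).det := by
  calc ∑ S : n → D, ((A * B).submatrix S S).det
      = ∑ S : n → D, ∑ τ : Perm n,
          ((τ.sign : ℤ) : R) * (∏ i, A (S (τ i)) i) * (B.submatrix id S).det := by
        refine Finset.sum_congr rfl fun S _ => ?_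
        rw [Matrix.submatrix_mul _ _ S id S Function.bijective_id, Matrix.det_mul,
          Matrix.det_apply', Finset.sum_mul]
        rfl
    _ = ∑ _τ : Perm n, (B * A).det := by
        rw [Finset.sum_comm]
        exact Finset.sum_congr rfl fun τ _ =>
          (det_mul_eq_sum_perm_prod_mul_det_submatrix A B τ).symm
    _ = ((Fintype.card n).factorial : R) * (B * A).det := by
        rw [Finset.sum_const, Finset.card_univ, Fintype.card_perm, nsmul_eq_mul]

end PrincipalMinors

section FirstFundamentalTheorem

/-- The coordinate functions of a matrix-valued function. -/
def entryFunctions {K X m n : Type*} (A : X → Matrix m n K) : Set (X → K) :=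
  Set.range fun (p : m × n) x => A x p.1 p.2

theorem exists_pow_mul_eq_of_mem_adjoin {K X Y : Type*} [CommRing K] {G : Set (Y → K)}
    {R : Subalgebra K (X → K)} {Γ : X → Y → Prop} {d : X → K} (hd : d ∈ R)
    (hG : ∀ f ∈ G, ∃ k : ℕ, ∃ h ∈ R, ∀ x y, Γ x y → d x ^ k * f y = h x)
    {f : Y → K} (hf : f ∈ Algebra.adjoin K G) :
    ∃ k : ℕ, ∃ h ∈ R, ∀ x y, Γ x y → d x ^ k * f y = h x := by
  induction hf using Algebra.adjoin_induction with
  | mem f hf => exact hG f hf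
  | algebraMap c => exact ⟨0, algebraMap K _ c, R.algebraMap_mem c, fun x y _ => by simp⟩
  | add f₁ f₂ _ _ h₁ h₂ =>
    obtain ⟨k₁, g₁, hg₁, h₁⟩ := h₁
    obtain ⟨k₂, g₂, hg₂, h₂⟩ := h₂
    refine ⟨k₁ + k₂, d ^ k₂ * g₁ + d ^ k₁ * g₂,
      R.add_mem (R.mul_mem (R.pow_mem hd _) hg₁) (R.mul_mem (R.pow_mem hd _) hg₂),
      fun x y hxy => ?_⟩
    simp only [Pi.add_apply, Pi.mul_apply, Pi.pow_apply, ← h₁ x y hxy, ← h₂ x y hxy]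
    ring
  | mul f₁ f₂ _ _ h₁ h₂ =>
    obtain ⟨k₁, g₁, hg₁, h₁⟩ := h₁
    obtain ⟨k₂, g₂, hg₂, h₂⟩ := h₂
    refine ⟨k₁ + k₂, g₁ * g₂, R.mul_mem hg₁ hg₂, fun x y hxy => ?_⟩
    simp only [Pi.mul_apply, ← h₁ x y hxy, ← h₂ x y hxy]
    ring

variable {K X D n : Type*} [Field K] [Fintype n]
  {G : Set (X → K)} {A : X → Matrix D n K} {B : X → Matrix n D K}

/-- The point `y` is a translate of `x` by `g`, where `g` acts on pairs of matrices by
`(A, B) ↦ (A g⁻¹, g B)` and trivially on the functions in `G`. -/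
structure IsTranslate (G : Set (X → K)) (A : X → Matrix D n K) (B : X → Matrix n D K)
    (g : Matrix n n K) (x y : X) : Prop where
  eq_of_mem : ∀ f ∈ G, f y = f x
  left_mul : A y * g = A x
  right_eq : B y = g * B x

theorem mul_apply_mem_adjoin (i j : D) : (fun x => (A x * B x) i j) ∈
    Algebra.adjoin K (G ∪ entryFunctions fun x => A x * B x) :=
  Algebra.subset_adjoin (Or.inr ⟨(i, j), rfl⟩)

variable [DecidableEq n]

theorem exists_minor_pow_mul_eq (S : n → D) {f : X → K}
    (hf : f ∈ Algebra.adjoin K (G ∪ (entryFunctions A ∪ entryFunctions B))) :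
    ∃ k : ℕ, ∃ h ∈ Algebra.adjoin K (G ∪ entryFunctions fun x => A x * B x),
      ∀ x y, IsTranslate G A B ((A x).submatrix S id) x y →
        ((A x * B x).submatrix S S).det ^ k * f y = h x := by
  refine exists_pow_mul_eq_of_mem_adjoin
    (det_mem fun i j => mul_apply_mem_adjoin (S i) (S j)) ?_ hf
  rintro u (hu | ⟨⟨i, j⟩, rfl⟩ | ⟨⟨i, j⟩, rfl⟩)
  · refine ⟨0, u, Algebra.subset_adjoin (Or.inl hu), fun x y hxy => ?_⟩
    rw [pow_zero, one_mul, hxy.eq_of_mem u hu]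
  · refine ⟨1, _, mul_apply_mem (fun i j => mul_apply_mem_adjoin i (S j))
      (adjugate_apply_mem fun i j => mul_apply_mem_adjoin (S i) (S j)) i j, fun x y hxy => ?_⟩
    rw [pow_one]
    exact congrFun₂ (det_smul_eq_mul_adjugate (B x) hxy.left_mul) i j
  · refine ⟨0, _, mul_apply_mem_adjoin (S i) j, fun x y hxy => ?_⟩
    simp only [pow_zero, one_mul, hxy.right_eq, Matrix.mul_apply, Matrix.submatrix_apply, id]

theorem exists_minor_pow_mul_mem (S : n → D) {f : X → K}
    (hf : f ∈ Algebra.adjoin K (G ∪ (entryFunctions A ∪ entryFunctions B)))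
    (hinv : ∀ x (g : Matrix n n K), g.det ≠ 0 → ∃ y, IsTranslate G A B g x y ∧ f y = f x) :
    ∃ k : ℕ, (fun x => ((A x * B x).submatrix S S).det) ^ k * f ∈
      Algebra.adjoin K (G ∪ entryFunctions fun x => A x * B x) := by
  obtain ⟨k, h, hh, heq⟩ := exists_minor_pow_mul_eq S hf
  have hd : (fun x => ((A x * B x).submatrix S S).det) ∈
      Algebra.adjoin K (G ∪ entryFunctions fun x => A x * B x) :=
    det_mem fun i j => mul_apply_mem_adjoin (S i) (S j)
  refine ⟨k + 1, ?_⟩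
  suffices hmul : (fun x => ((A x * B x).submatrix S S).det) ^ (k + 1) * f =
      (fun x => ((A x * B x).submatrix S S).det) * h from hmul ▸ Subalgebra.mul_mem _ hd hh
  funext x
  simp only [Pi.mul_apply, Pi.pow_apply]
  by_cases hdet : ((A x).submatrix S id).det = 0
  · simp [Matrix.submatrix_mul _ _ S id S Function.bijective_id, hdet]
  · obtain ⟨y, hxy, hf⟩ := hinv x _ hdet
    rw [← heq x y hxy, hf]
    ring

/-- Where the minor of `A` on the rows `S` is nonzero, translating by that block expresses an
invariant through the entries of `A B`, with a power of the `S`-th principal minor of `A B` as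
denominator; these minors sum to the nonzero constant `n! c ^ n`. -/
theorem mem_adjoin_entryFunctions_mul [CharZero K] [Fintype D] {c : K} (hc : c ≠ 0)
    (hBA : ∀ x, B x * A x = c • 1) {f : X → K}
    (hf : f ∈ Algebra.adjoin K (G ∪ (entryFunctions A ∪ entryFunctions B)))
    (hinv : ∀ x (g : Matrix n n K), g.det ≠ 0 → ∃ y, IsTranslate G A B g x y ∧ f y = f x) :
    f ∈ Algebra.adjoin K (G ∪ entryFunctions fun x => A x * B x) := by
  set u : K := (Fintype.card n).factorial * c ^ Fintype.card n
  have hu : u ≠ 0 :=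
    mul_ne_zero (Nat.cast_ne_zero.2 (Nat.factorial_ne_zero _)) (pow_ne_zero _ hc)
  refine Subalgebra.mem_of_finsetSum_eq_one_of_pow_smul_mem _ Finset.univ
    (fun (S : n → D) x => ((A x * B x).submatrix S S).det) (fun _ => algebraMap K _ u⁻¹) ?_
    (fun S => det_mem fun i j => mul_apply_mem_adjoin (S i) (S j))
    (fun _ => Subalgebra.algebraMap_mem _ _) f fun S => exists_minor_pow_mul_mem S hf hinv
  funext x
  have hsum := sum_det_submatrix_mul (A x) (B x)
  rw [hBA, Matrix.det_smul, Matrix.det_one, mul_one] at hsum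
  rw [← Finset.mul_sum, Pi.mul_apply, Finset.sum_apply, hsum]
  exact inv_mul_cancel₀ hu

end FirstFundamentalTheorem

section ComplementaryFactorization

variable {K : Type*} [Field K]

theorem exists_complementary_linearMap {U V : Type*} [AddCommGroup U] [Module K U]
    [AddCommGroup V] [Module K V] [FiniteDimensional K V] {c : K} (hc : c ≠ 0)
    {a : U →ₗ[K] V} {b : V →ₗ[K] U} (hba : b ∘ₗ a = c • LinearMap.id) {r : ℕ}
    (hr : Module.finrank K V = Module.finrank K U + r) :
    ∃ (a' : (Fin r → K) →ₗ[K] V) (b' : V →ₗ[K] Fin r → K),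
      b' ∘ₗ a' = (-c) • LinearMap.id ∧ a' ∘ₗ b' = a ∘ₗ b - c • LinearMap.id := by
  have hba' (u) : b (a u) = c • u := LinearMap.congr_fun hba u
  have hsurj : Function.Surjective b := fun u => ⟨c⁻¹ • a u, by
    rw [map_smul, hba', inv_smul_smul₀ hc]⟩
  have hker : Module.finrank K (LinearMap.ker b) = r := by
    have hrank := LinearMap.finrank_range_add_finrank_ker b
    rw [LinearMap.range_eq_top.2 hsurj, finrank_top] at hrank
    lia
  let e := (Module.finBasisOfFinrankEq K (LinearMap.ker b) hker).equivFun
  let p : V →ₗ[K] LinearMap.ker b :=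
    (a ∘ₗ b - c • LinearMap.id).codRestrict _ fun v => by simp [hba']
  refine ⟨(LinearMap.ker b).subtype ∘ₗ e.symm.toLinearMap, e.toLinearMap ∘ₗ p, ?_, ?_⟩
  · have hp (v : LinearMap.ker b) : p v = (-c) • v := Subtype.ext (by simp [p])
    exact LinearMap.ext fun v => by simp [hp]
  · exact LinearMap.ext fun v => by simp [p]

theorem exists_complementary_factorization {D n : Type*} [Fintype D] [DecidableEq D] [Fintype n]
    [DecidableEq n] {r : ℕ} (hr : Fintype.card D = Fintype.card n + r) {c : K} (hc : c ≠ 0)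
    {A : Matrix D n K} {B : Matrix n D K} (hBA : B * A = c • 1) :
    ∃ (A' : Matrix D (Fin r) K) (B' : Matrix (Fin r) D K),
      B' * A' = (-c) • 1 ∧ A' * B' = A * B - c • 1 := by
  obtain ⟨a', b', hba, hab⟩ := exists_complementary_linearMap hc (r := r)
    (a := A.toLin') (b := B.toLin') (by rw [← Matrix.toLin'_mul, hBA]; simp) (by simpa using hr)
  refine ⟨a'.toMatrix', b'.toMatrix', ?_, ?_⟩
  · rw [← LinearMap.toMatrix'_comp, hba, map_smul, LinearMap.toMatrix'_id]
  · rw [← LinearMap.toMatrix'_comp, hab, map_sub, map_smul, LinearMap.toMatrix'_id,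
      LinearMap.toMatrix'_comp, LinearMap.toMatrix'_toLin', LinearMap.toMatrix'_toLin']

end ComplementaryFactorization

section GradedMatrices

variable {I K T : Type*} [CommRing K]

/-- For a basis graded by `π : T → I`, a matrix is a block from degree `j` to degree `i` when it
maps the `j`-th graded piece to the `i`-th one and kills all the others. -/
def IsBlock (π : T → I) (i j : I) (U : Matrix T T K) : Prop :=
  ∀ p q, U p q ≠ 0 → π p = i ∧ π q = j

/-- For a basis graded by `π : T → I`, a matrix is homogeneous when it preserves each graded
piece. -/
def IsHomogeneousMatrix (π : T → I) (U : Matrix T T K) : Prop :=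
  ∀ p q, U p q ≠ 0 → π p = π q

variable {π : T → I} {i j k : I} {U V : Matrix T T K}

theorem IsBlock.mul [Fintype T] (hU : IsBlock π i j U) (hV : IsBlock π j k V) :
    IsBlock π i k (U * V) := fun p q hpq => by
  obtain ⟨s, -, hs⟩ := Finset.exists_ne_zero_of_sum_ne_zero hpq
  exact ⟨(hU p s (left_ne_zero_of_mul hs)).1, (hV s q (right_ne_zero_of_mul hs)).2⟩

theorem IsHomogeneousMatrix.mul_isBlock [Fintype T] (hU : IsHomogeneousMatrix π U)
    (hV : IsBlock π i j V) : IsBlock π i j (U * V) := fun p q hpq => by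
  obtain ⟨s, -, hs⟩ := Finset.exists_ne_zero_of_sum_ne_zero hpq
  obtain ⟨hi, hj⟩ := hV s q (right_ne_zero_of_mul hs)
  exact ⟨(hU p s (left_ne_zero_of_mul hs)).trans hi, hj⟩

theorem IsBlock.mul_isHomogeneousMatrix [Fintype T] (hU : IsBlock π i j U)
    (hV : IsHomogeneousMatrix π V) : IsBlock π i j (U * V) := fun p q hpq => by
  obtain ⟨s, -, hs⟩ := Finset.exists_ne_zero_of_sum_ne_zero hpq
  obtain ⟨hi, hj⟩ := hU p s (left_ne_zero_of_mul hs)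
  exact ⟨hi, (hV s q (right_ne_zero_of_mul hs)).symm.trans hj⟩

theorem IsBlock.isHomogeneousMatrix (hU : IsBlock π i i U) : IsHomogeneousMatrix π U :=
  fun p q hpq => (hU p q hpq).1.trans (hU p q hpq).2.symm

theorem IsHomogeneousMatrix.sub (hU : IsHomogeneousMatrix π U) (hV : IsHomogeneousMatrix π V) :
    IsHomogeneousMatrix π (U - V) := fun p q hpq => by
  by_contra hne
  exact hpq (by rw [Matrix.sub_apply, not_imp_comm.1 (hU p q) hne, not_imp_comm.1 (hV p q) hne,
    sub_zero])

theorem IsHomogeneousMatrix.sum {A : Type*} [Fintype A] {U : A → Matrix T T K}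
    (hU : ∀ a, IsHomogeneousMatrix π (U a)) : IsHomogeneousMatrix π (∑ a, U a) := fun p q hpq => by
  rw [Matrix.sum_apply] at hpq
  obtain ⟨a, -, ha⟩ := Finset.exists_ne_zero_of_sum_ne_zero hpq
  exact hU a p q ha

theorem isHomogeneousMatrix_diagonal [DecidableEq T] (π : T → I) (d : T → K) :
    IsHomogeneousMatrix π (Matrix.diagonal d) := fun p q hpq => by
  by_contra hne
  exact hpq (Matrix.diagonal_apply_ne d fun h => hne (congrArg π h))

variable {n : I → Type*} {U V : Matrix (Σ i, n i) (Σ i, n i) K}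

/-- The block of a matrix from degree `j` to degree `i`, for a basis presented as the disjoint
union of bases of the graded pieces. -/
abbrev gradedBlock (U : Matrix (Σ i, n i) (Σ i, n i) K) (i j : I) : Matrix (n i) (n j) K :=
  U.submatrix (Sigma.mk i) (Sigma.mk j)

theorem gradedBlock_mul [Fintype I] [∀ i, Fintype (n i)]
    (h : ∀ j' ≠ j, ∀ p s q, U ⟨i, p⟩ ⟨j', s⟩ * V ⟨j', s⟩ ⟨k, q⟩ = 0) :
    gradedBlock (U * V) i k = gradedBlock U i j * gradedBlock V j k := by
  ext p q
  rw [gradedBlock, Matrix.submatrix_apply, Matrix.mul_apply, Fintype.sum_sigma,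
    Finset.sum_eq_single j]
  · rfl
  · exact fun j' _ hj' => Finset.sum_eq_zero fun s _ => h j' hj' p s q
  · exact fun hj => absurd (Finset.mem_univ j) hj

theorem IsBlock.gradedBlock_mul [Fintype I] [∀ i, Fintype (n i)] {i' j' : I}
    (hU : IsBlock Sigma.fst i j U) : gradedBlock (U * V) i' j' =
      gradedBlock U i' j * gradedBlock V j j' :=
  _root_.gradedBlock_mul fun _ hj _ _ _ =>
    mul_eq_zero_of_left (not_imp_comm.1 (hU _ _) fun h => hj h.2) _

theorem IsHomogeneousMatrix.gradedBlock_mul [Fintype I] [∀ i, Fintype (n i)]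
    (hU : IsHomogeneousMatrix Sigma.fst U) : gradedBlock (U * V) i j =
      gradedBlock U i i * gradedBlock V i j :=
  _root_.gradedBlock_mul fun _ hj _ _ _ =>
    mul_eq_zero_of_left (not_imp_comm.1 (hU _ _) fun h => hj h.symm) _

theorem IsHomogeneousMatrix.gradedBlock_mul_right [Fintype I] [∀ i, Fintype (n i)]
    (hV : IsHomogeneousMatrix Sigma.fst V) : gradedBlock (U * V) i j =
      gradedBlock U i j * gradedBlock V j j :=
  _root_.gradedBlock_mul fun _ hj _ _ _ =>
    mul_eq_zero_of_right _ (not_imp_comm.1 (hV _ _) fun h => hj h)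

theorem IsBlock.ext (hU : IsBlock Sigma.fst i j U) (hV : IsBlock Sigma.fst i j V)
    (h : gradedBlock U i j = gradedBlock V i j) :
    U = V := by
  ext ⟨i', p⟩ ⟨j', q⟩
  by_cases hij : i' = i ∧ j' = j
  · obtain ⟨rfl, rfl⟩ := hij
    exact congrFun₂ h p q
  · rw [not_imp_comm.1 (hU _ _) hij, not_imp_comm.1 (hV _ _) hij]

theorem IsHomogeneousMatrix.ext (hU : IsHomogeneousMatrix Sigma.fst U)
    (hV : IsHomogeneousMatrix Sigma.fst V)
    (h : ∀ i, gradedBlock U i i = gradedBlock V i i) :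
    U = V := by
  ext ⟨i, p⟩ ⟨j, q⟩
  by_cases hij : i = j
  · subst hij
    exact congrFun₂ (h i) p q
  · rw [not_imp_comm.1 (hU _ _) hij, not_imp_comm.1 (hV _ _) hij]

theorem gradedBlock_diagonal [DecidableEq I] [∀ i, DecidableEq (n i)] (l : I → K) (i : I) :
    gradedBlock (Matrix.diagonal fun p : Σ i, n i => l p.1) i i =
      l i • 1 := by
  rw [gradedBlock, Matrix.submatrix_diagonal _ _ sigma_mk_injective, Matrix.smul_one_eq_diagonal]
  rfl

theorem isHomogeneousMatrix_blockDiagonal' [DecidableEq I] (g : ∀ i, Matrix (n i) (n i) K) :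
    IsHomogeneousMatrix Sigma.fst (Matrix.blockDiagonal' g) := fun _ _ hpq => by
  by_contra hne
  exact hpq (Matrix.blockDiagonal'_apply_ne _ _ _ hne)

theorem gradedBlock_blockDiagonal' [DecidableEq I] (g : ∀ i, Matrix (n i) (n i) K) (i : I) :
    gradedBlock (Matrix.blockDiagonal' g) i i = g i :=
  Matrix.ext fun p q => Matrix.blockDiagonal'_apply_eq g i p q

end GradedMatrices

namespace FinQuiver

section TotalSpace

variable (Q : FinQuiver) {K T : Type} [Field K] [Fintype T]

/-- A representation of `Q̄` on the space with basis `T`, graded over the vertices by `π`: each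
arrow acts on the total space as a block from its tail to its head. -/
def IsGradedRep (π : T → Q.I) (M : Q.DA → Matrix T T K) : Prop :=
  ∀ a, IsBlock π (Q.dh a) (Q.dt a) (M a)

/-- The moment map `∑ [x_a, x_{a*}]`, with values in the endomorphisms of the total space. -/
def totalMoment (M : Q.DA → Matrix T T K) : Matrix T T K :=
  ∑ a : Q.A, (M (Sum.inl a) * M (Sum.inr a) - M (Sum.inr a) * M (Sum.inl a))

variable {Q}

theorem IsGradedRep.isHomogeneousMatrix_totalMoment {π : T → Q.I} {M : Q.DA → Matrix T T K}
    (hM : Q.IsGradedRep π M) : IsHomogeneousMatrix π (Q.totalMoment M) :=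
  .sum fun a => ((hM (Sum.inl a)).mul (hM (Sum.inr a))).isHomogeneousMatrix.sub
    ((hM (Sum.inr a)).mul (hM (Sum.inl a))).isHomogeneousMatrix

variable [DecidableEq T]

/-- Two families of matrices are graded conjugate when a homogeneous change of basis takes one to
the other. -/
def GradedConj (π : T → Q.I) (M M' : Q.DA → Matrix T T K) : Prop :=
  ∃ g g' : Matrix T T K, g * g' = 1 ∧ IsHomogeneousMatrix π g ∧ IsHomogeneousMatrix π g' ∧
    ∀ a, M' a = g * M a * g'

variable (Q) in
/-- The fibre of the moment map over `λ`, in terms of graded representations. -/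
def TotalFiber (l : Q.I → K) (π : T → Q.I) : Set (Q.DA → Matrix T T K) :=
  {M | Q.IsGradedRep π M ∧ Q.totalMoment M = Matrix.diagonal fun p => l (π p)}

variable (Q) in
/-- The matrix entries, as functions on the fibre of the moment map. -/
def totalCoords (l : Q.I → K) (π : T → Q.I) : Set (Q.TotalFiber l π → K) :=
  Set.range fun (c : Q.DA × T × T) (x : Q.TotalFiber l π) => x.1 c.1 c.2.1 c.2.2

variable (Q) in
/-- The coordinate ring of `N(λ,α)`, where `α` is the vector of cardinalities of the fibres of
`π`, in terms of graded representations. -/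
def TotalInvRing (l : Q.I → K) (π : T → Q.I) : Subalgebra K (Q.TotalFiber l π → K) :=
  Algebra.adjoin K (Q.totalCoords l π) ⊓ relInv K fun x y => GradedConj π x.1 y.1

theorem GradedConj.mem_totalFiber {l : Q.I → K} {π : T → Q.I} {M M' : Q.DA → Matrix T T K}
    (h : GradedConj π M M') (hM : M ∈ Q.TotalFiber l π) : M' ∈ Q.TotalFiber l π := by
  obtain ⟨g, g', hgg', hg, hg', hM'⟩ := h
  obtain rfl : M' = fun a => g * M a * g' := funext hM'
  have hmul (U V : Matrix T T K) : (g * U * g') * (g * V * g') = g * (U * V) * g' := by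
    rw [Matrix.mul_assoc _ g', ← Matrix.mul_assoc g', ← Matrix.mul_assoc g',
      mul_eq_one_comm.1 hgg', Matrix.one_mul, ← Matrix.mul_assoc, Matrix.mul_assoc g]
  have hcomm : g * Matrix.diagonal (fun p => l (π p)) = Matrix.diagonal (fun p => l (π p)) * g := by
    ext p q
    rw [Matrix.mul_diagonal, Matrix.diagonal_mul]
    by_cases h : g p q = 0
    · rw [h, zero_mul, mul_zero]
    · rw [hg p q h, mul_comm]
  refine ⟨fun a => (hg.mul_isBlock (hM.1 a)).mul_isHomogeneousMatrix hg', ?_⟩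
  simp only [totalMoment, hmul, ← Matrix.sub_mul, ← Matrix.mul_sub, ← Matrix.sum_mul,
    ← Matrix.mul_sum]
  rw [← totalMoment, hM.2, hcomm, Matrix.mul_assoc, hgg', Matrix.mul_one]

theorem gradedConj_comp_iff {T' : Type} [Fintype T'] [DecidableEq T'] (π : T → Q.I) (e : T' ≃ T)
    {M M' : Q.DA → Matrix T T K} :
    GradedConj (π ∘ e) (fun a => (M a).submatrix e e) (fun a => (M' a).submatrix e e) ↔
      GradedConj π M M' := by
  constructor
  · rintro ⟨g, g', hgg', hg, hg', h⟩
    refine ⟨g.submatrix e.symm e.symm, g'.submatrix e.symm e.symm, ?_, ?_, ?_, fun a => ?_⟩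
    · rw [Matrix.submatrix_mul_equiv, hgg', Matrix.submatrix_one_equiv]
    · exact fun p q hpq => by simpa using hg _ _ hpq
    · exact fun p q hpq => by simpa using hg' _ _ hpq
    · have := congrArg (fun U => Matrix.submatrix U e.symm e.symm) (h a)
      simpa [← Matrix.submatrix_mul_equiv _ _ _ e.symm _] using this
  · rintro ⟨g, g', hgg', hg, hg', h⟩
    refine ⟨g.submatrix e e, g'.submatrix e e, ?_, ?_, ?_, fun a => ?_⟩
    · rw [Matrix.submatrix_mul_equiv, hgg', Matrix.submatrix_one_equiv]
    · exact fun p q hpq => hg _ _ hpq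
    · exact fun p q hpq => hg' _ _ hpq
    · rw [Matrix.submatrix_mul_equiv, Matrix.submatrix_mul_equiv, ← h]

theorem submatrix_mem_totalFiber {T' : Type} [Fintype T'] [DecidableEq T'] {l : Q.I → K}
    {π : T → Q.I} (e : T' ≃ T) {M : Q.DA → Matrix T T K} (hM : M ∈ Q.TotalFiber l π) :
    (fun a => (M a).submatrix e e) ∈ Q.TotalFiber l (π ∘ e) := by
  refine ⟨fun a p q hpq => hM.1 a _ _ hpq, ?_⟩
  have h := congrArg (fun U => Matrix.submatrix U e e) hM.2
  rw [Matrix.submatrix_diagonal_equiv] at h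
  refine Eq.trans ?_ h
  simp only [totalMoment, Matrix.submatrix_mul_equiv]
  ext p q
  simp only [Matrix.submatrix_apply, Matrix.sum_apply, Matrix.sub_apply]

theorem nonempty_totalInvRing_algEquiv_comp {T' : Type} [Fintype T'] [DecidableEq T']
    (l : Q.I → K) (π : T → Q.I) (e : T' ≃ T) :
    Nonempty (Q.TotalInvRing l π ≃ₐ[K] Q.TotalInvRing l (π ∘ e)) := by
  let φ : Q.TotalFiber l π ≃ Q.TotalFiber l (π ∘ e) :=
    { toFun := fun M => ⟨_, submatrix_mem_totalFiber e M.2⟩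
      invFun := fun M => ⟨fun a => (M.1 a).submatrix e.symm e.symm, by
        simpa [Function.comp_assoc] using submatrix_mem_totalFiber e.symm M.2⟩
      left_inv := fun M => Subtype.ext <| funext fun a => by simp
      right_inv := fun M => Subtype.ext <| funext fun a => by simp }
  refine nonempty_algEquiv_adjoin_inf_relInv φ ?_ ?_ fun x x' => (gradedConj_comp_iff π e).symm
  · rintro _ ⟨⟨a, p, q⟩, rfl⟩
    exact Algebra.subset_adjoin ⟨(a, e.symm p, e.symm q), rfl⟩
  · rintro _ ⟨⟨a, p, q⟩, rfl⟩
    exact Algebra.subset_adjoin ⟨(a, e p, e q), rfl⟩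

end TotalSpace

section TotalRepresentation

variable {Q : FinQuiver} {K : Type} [Field K] {α : Q.I → ℕ} {l : Q.I → K}

/-- The representation whose arrows act as the blocks of the given matrices. -/
def ofTotal (M : Q.DA → Matrix (Σ i, Fin (α i)) (Σ i, Fin (α i)) K) : Q.Rep K α :=
  fun a => gradedBlock (M a) (Q.dh a) (Q.dt a)

/-- The action of the arrows of a representation on the direct sum of its vertex spaces. -/
def toTotal (x : Q.Rep K α) (a : Q.DA) : Matrix (Σ i, Fin (α i)) (Σ i, Fin (α i)) K :=
  Matrix.of fun p q => if h : p.1 = Q.dh a ∧ q.1 = Q.dt a then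
    x a (Fin.cast (congrArg α h.1) p.2) (Fin.cast (congrArg α h.2) q.2) else 0

theorem ofTotal_toTotal (x : Q.Rep K α) : ofTotal (toTotal x) = x :=
  funext fun _ => Matrix.ext fun _ _ => dif_pos ⟨rfl, rfl⟩

theorem isGradedRep_toTotal (x : Q.Rep K α) : Q.IsGradedRep Sigma.fst (toTotal x) :=
  fun a p q hpq => by
    by_contra hne
    exact hpq (dif_neg hne)

variable {M M' : Q.DA → Matrix (Σ i, Fin (α i)) (Σ i, Fin (α i)) K}

theorem IsGradedRep.toTotal_ofTotal (hM : Q.IsGradedRep Sigma.fst M) : toTotal (ofTotal M) = M :=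
  funext fun a => (isGradedRep_toTotal _ a).ext (hM a) (congrFun (ofTotal_toTotal (ofTotal M)) a)

theorem gradedBlock_mul_of_isBlock {i j k : Q.I}
    {U V : Matrix (Σ i, Fin (α i)) (Σ i, Fin (α i)) K}
    (hU : IsBlock Sigma.fst i j U) (hV : IsBlock Sigma.fst j i V) :
    gradedBlock (U * V) k k =
      if h : i = k then
        (gradedBlock U i j * gradedBlock V j i).submatrix
          (Fin.cast (congrArg α h).symm) (Fin.cast (congrArg α h).symm)
      else 0 := by
  split_ifs with h
  · subst h
    exact hU.gradedBlock_mul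
  · ext p q
    exact not_imp_comm.1 ((hU.mul hV) _ _) fun hpq => h hpq.1.symm

theorem IsGradedRep.gradedBlock_totalMoment (hM : Q.IsGradedRep Sigma.fst M) (i : Q.I) :
    gradedBlock (Q.totalMoment M) i i = Q.moment K α (ofTotal M) i := by
  have hsum : gradedBlock (Q.totalMoment M) i i =
      ∑ a : Q.A, gradedBlock (M (Sum.inl a) * M (Sum.inr a)) i i -
        ∑ a : Q.A, gradedBlock (M (Sum.inr a) * M (Sum.inl a)) i i := by
    ext p q
    simp only [totalMoment, gradedBlock, Finset.sum_sub_distrib, Matrix.submatrix_apply,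
      Matrix.sub_apply, Matrix.sum_apply]
  rw [hsum, moment]
  congr 1
  · exact Finset.sum_congr rfl fun a _ =>
      gradedBlock_mul_of_isBlock (hM (Sum.inl a)) (hM (Sum.inr a))
  · exact Finset.sum_congr rfl fun a _ =>
      gradedBlock_mul_of_isBlock (hM (Sum.inr a)) (hM (Sum.inl a))

theorem IsGradedRep.mem_totalFiber_iff (hM : Q.IsGradedRep Sigma.fst M) :
    M ∈ Q.TotalFiber l Sigma.fst ↔ ofTotal M ∈ Q.MomentFiber K l α := by
  refine Iff.trans (b := Q.totalMoment M = Matrix.diagonal fun p => l p.1) ?_ ⟨?_, ?_⟩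
  · exact and_iff_right hM
  · intro h i
    rw [← hM.gradedBlock_totalMoment, h, gradedBlock_diagonal]
  · refine fun h => hM.isHomogeneousMatrix_totalMoment.ext (isHomogeneousMatrix_diagonal _ _)
      fun i => ?_
    rw [hM.gradedBlock_totalMoment, gradedBlock_diagonal]
    exact h i

theorem ofTotal_mul_mul {g g' : Matrix (Σ i, Fin (α i)) (Σ i, Fin (α i)) K}
    (hg : IsHomogeneousMatrix Sigma.fst g) (hg' : IsHomogeneousMatrix Sigma.fst g') (a : Q.DA) :
    ofTotal (fun a => g * M a * g') a =
      gradedBlock g (Q.dh a) (Q.dh a) * ofTotal M a * gradedBlock g' (Q.dt a) (Q.dt a) :=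
  hg'.gradedBlock_mul_right.trans (congrArg (· * _) hg.gradedBlock_mul)

theorem exists_eq_glAct_iff (hM' : Q.IsGradedRep Sigma.fst M') (hM : Q.IsGradedRep Sigma.fst M) :
    (∃ g : Q.Gl K α, ofTotal M' = Q.glAct K α g (ofTotal M)) ↔ GradedConj Sigma.fst M M' := by
  constructor
  · rintro ⟨g, h⟩
    have hg := isHomogeneousMatrix_blockDiagonal' fun i => (g i).1
    have hg' := isHomogeneousMatrix_blockDiagonal' fun i => (g i)⁻¹.1
    refine ⟨_, _, ?_, hg, hg', fun a =>
      (hM' a).ext ((hg.mul_isBlock (hM a)).mul_isHomogeneousMatrix hg') ?_⟩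
    · rw [← Matrix.blockDiagonal'_mul, ← Matrix.blockDiagonal'_one]
      exact congrArg _ (funext fun i => (g i).mul_inv)
    · refine (congrFun h a).trans (Eq.trans ?_ (ofTotal_mul_mul hg hg' a).symm)
      rw [gradedBlock_blockDiagonal', gradedBlock_blockDiagonal']
      rfl
  · rintro ⟨g, g', hgg', hg, hg', h⟩
    have hinv {g g' : Matrix (Σ i, Fin (α i)) (Σ i, Fin (α i)) K}
        (hg : IsHomogeneousMatrix Sigma.fst g) (hgg' : g * g' = 1) (i : Q.I) :
        gradedBlock g i i * gradedBlock g' i i = 1 := by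
      rw [← hg.gradedBlock_mul, hgg', gradedBlock, Matrix.submatrix_one _ sigma_mk_injective]
    refine ⟨fun i => ⟨_, _, hinv hg hgg' i, hinv hg' (mul_eq_one_comm.1 hgg') i⟩,
      funext fun a => ?_⟩
    rw [show M' = fun a => g * M a * g' from funext h]
    exact ofTotal_mul_mul hg hg' a

/-- A point of the fibre of the moment map is determined by its action on the total space. -/
def momentFiberEquiv (l : Q.I → K) (α : Q.I → ℕ) :
    Q.MomentFiber K l α ≃ Q.TotalFiber l (Sigma.fst : (Σ i, Fin (α i)) → Q.I) where
  toFun x := ⟨toTotal x.1, (isGradedRep_toTotal x.1).mem_totalFiber_iff.2 <| by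
    rw [ofTotal_toTotal]; exact x.2⟩
  invFun M := ⟨ofTotal M.1, M.2.1.mem_totalFiber_iff.1 M.2⟩
  left_inv x := Subtype.ext (ofTotal_toTotal x.1)
  right_inv M := Subtype.ext M.2.1.toTotal_ofTotal

theorem fnRing_eq_adjoin (α : Q.I → ℕ) (V : Set (Q.Rep K α)) : Q.fnRing K α V =
    Algebra.adjoin K (Set.range fun (c : Q.Coords α) (v : V) => v.1 c.1 c.2.1 c.2.2) :=
  (Algebra.adjoin_range_eq_range_aeval ..).symm

theorem nonempty_invRing_algEquiv_totalInvRing (l : Q.I → K) (α : Q.I → ℕ) :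
    Nonempty (Q.InvRing K l α ≃ₐ[K]
      Q.TotalInvRing l (Sigma.fst : (Σ i, Fin (α i)) → Q.I)) := by
  rw [InvRing, fnRing_eq_adjoin]
  refine nonempty_algEquiv_adjoin_inf_relInv (momentFiberEquiv l α) ?_ ?_ fun x x' => ?_
  · rintro _ ⟨⟨a, p, q⟩, rfl⟩
    exact Algebra.subset_adjoin ⟨(a, ⟨_, p⟩, ⟨_, q⟩), funext fun M => rfl⟩
  · rintro _ ⟨⟨a, ⟨i, p⟩, ⟨j, q⟩⟩, rfl⟩
    by_cases h : i = Q.dh a ∧ j = Q.dt a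
    · obtain ⟨rfl, rfl⟩ := h
      exact Algebra.subset_adjoin ⟨⟨a, p, q⟩, funext fun x =>
        (congrFun₂ (congrFun (ofTotal_toTotal x.1) a) p q).symm⟩
    · convert Subalgebra.zero_mem _
      exact funext fun x => dif_neg h
  · have h := exists_eq_glAct_iff (isGradedRep_toTotal x'.1) (isGradedRep_toTotal x.1)
    rwa [ofTotal_toTotal, ofTotal_toTotal] at h

end TotalRepresentation

end FinQuiver

namespace FinQuiver

section SupportQuiver

variable {Q : FinQuiver} {K : Type} [Field K] (l : Q.I → K) {β : Q.I → ℤ}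

/-- The inclusion of the arrows of the double of the support quiver. -/
def suppArrow (a : (Q.suppQuiver β).DA) : Q.DA := Sum.map Subtype.val Subtype.val a

theorem dh_suppArrow (a : (Q.suppQuiver β).DA) : Q.dh (suppArrow a) =
    ((Q.suppQuiver β).dh a).1 := by
  cases a <;> rfl

theorem dt_suppArrow (a : (Q.suppQuiver β).DA) : Q.dt (suppArrow a) =
    ((Q.suppQuiver β).dt a).1 := by
  cases a <;> rfl

variable {T : Type} {π : T → (Q.suppQuiver β).I}

theorem IsGradedRep.eq_zero_of_notMem_range {M : Q.DA → Matrix T T K}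
    (hM : Q.IsGradedRep (fun p => (π p).1) M) {a : Q.DA} (ha : a ∉ Set.range (suppArrow (β := β))) :
    M a = 0 := by
  ext p q
  by_contra hpq
  obtain ⟨hp, hq⟩ := hM a p q hpq
  have hh : β (Q.dh a) ≠ 0 := hp ▸ (π p).2
  have ht : β (Q.dt a) ≠ 0 := hq ▸ (π q).2
  rcases a with a | a
  · exact ha ⟨Sum.inl ⟨a, hh, ht⟩, rfl⟩
  · exact ha ⟨Sum.inr ⟨a, ht, hh⟩, rfl⟩

theorem suppArrow_injective : Function.Injective (suppArrow (Q := Q) (β := β)) :=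
  Subtype.val_injective.sumMap Subtype.val_injective

theorem IsGradedRep.comp_suppArrow {M : Q.DA → Matrix T T K}
    (hM : Q.IsGradedRep (fun p => (π p).1) M) :
    (Q.suppQuiver β).IsGradedRep π (M ∘ suppArrow) := fun a p q hpq =>
  (hM _ p q hpq).imp (fun h => Subtype.ext (h.trans (dh_suppArrow a)))
    fun h => Subtype.ext (h.trans (dt_suppArrow a))

theorem IsGradedRep.extend_suppArrow {M : (Q.suppQuiver β).DA → Matrix T T K}
    (hM : (Q.suppQuiver β).IsGradedRep π M) :
    Q.IsGradedRep (fun p => (π p).1) (Function.extend suppArrow M 0) := fun a p q hpq => by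
  by_cases ha : ∃ a', suppArrow (β := β) a' = a
  · obtain ⟨a, rfl⟩ := ha
    rw [suppArrow_injective.extend_apply] at hpq
    rw [dh_suppArrow, dt_suppArrow]
    exact (hM a p q hpq).imp (congrArg _) (congrArg _)
  · rw [Function.extend_apply' _ _ _ ha] at hpq
    exact absurd rfl hpq

variable [Fintype T]

theorem IsGradedRep.totalMoment_comp_suppArrow {M : Q.DA → Matrix T T K}
    (hM : Q.IsGradedRep (fun p => (π p).1) M) :
    (Q.suppQuiver β).totalMoment (M ∘ suppArrow) = Q.totalMoment M := by
  refine Fintype.sum_of_injective (fun a : (Q.suppQuiver β).A => a.1)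
    Subtype.val_injective _ _ (fun a ha => ?_) fun a => rfl
  have hl : M (Sum.inl a) = 0 := hM.eq_zero_of_notMem_range (β := β) <| by
    rintro ⟨a' | a', h⟩
    · exact ha ⟨a', Sum.inl.inj h⟩
    · exact Sum.inr_ne_inl h
  rw [hl, Matrix.zero_mul, Matrix.mul_zero, sub_zero]

variable [DecidableEq T]

/-- Graded representations supported on `supp β` are representations of the support quiver. -/
def suppFiberEquiv (π : T → (Q.suppQuiver β).I) : Q.TotalFiber l (fun p => (π p).1) ≃
    (Q.suppQuiver β).TotalFiber (fun i => l i.1) π where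
  toFun M := ⟨M.1 ∘ suppArrow, M.2.1.comp_suppArrow, M.2.1.totalMoment_comp_suppArrow.trans M.2.2⟩
  invFun M := ⟨Function.extend suppArrow M.1 0, M.2.1.extend_suppArrow, by
    have h := M.2.1.extend_suppArrow.totalMoment_comp_suppArrow
    rw [Function.extend_comp suppArrow_injective] at h
    exact h.symm.trans M.2.2⟩
  left_inv M := Subtype.ext <| funext fun a => by
    by_cases ha : ∃ a', suppArrow (β := β) a' = a
    · obtain ⟨a, rfl⟩ := ha
      exact suppArrow_injective.extend_apply _ _ a
    · exact (Function.extend_apply' _ _ _ ha).trans (M.2.1.eq_zero_of_notMem_range ha).symm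
  right_inv M := Subtype.ext (Function.extend_comp suppArrow_injective _ _)

theorem nonempty_totalInvRing_algEquiv_suppQuiver (π : T → (Q.suppQuiver β).I) :
    Nonempty (Q.TotalInvRing l (fun p => (π p).1) ≃ₐ[K]
      (Q.suppQuiver β).TotalInvRing (fun i => l i.1) π) := by
  refine nonempty_algEquiv_adjoin_inf_relInv (suppFiberEquiv l π) ?_ ?_ fun x x' => ?_
  · rintro _ ⟨⟨a, p, q⟩, rfl⟩
    by_cases ha : ∃ a', suppArrow (β := β) a' = a
    · obtain ⟨a, rfl⟩ := ha
      exact Algebra.subset_adjoin ⟨(a, p, q), funext fun M =>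
        (congrFun₂ (suppArrow_injective.extend_apply M.1 (0 : Q.DA → Matrix T T K) a) p q).symm⟩
    · convert Subalgebra.zero_mem _
      exact funext fun M =>
        congrFun₂ (Function.extend_apply' M.1 (0 : Q.DA → Matrix T T K) a ha) p q
  · rintro _ ⟨⟨a, p, q⟩, rfl⟩
    exact Algebra.subset_adjoin ⟨(suppArrow a, p, q), rfl⟩
  · have hhom {g : Matrix T T K} :
        IsHomogeneousMatrix (fun p => (π p).1) g ↔ IsHomogeneousMatrix π g :=
      forall₂_congr fun p q => imp_congr_right fun _ => Subtype.ext_iff.symm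
    refine exists₂_congr fun g g' => and_congr_right fun _ => and_congr hhom (and_congr hhom
      ⟨fun h a => h _, fun h a => ?_⟩)
    by_cases ha : ∃ a', suppArrow (β := β) a' = a
    · obtain ⟨a, rfl⟩ := ha
      exact h a
    · rw [x.2.1.eq_zero_of_notMem_range ha, x'.2.1.eq_zero_of_notMem_range ha, Matrix.mul_zero,
        Matrix.zero_mul]

theorem nonempty_invRing_algEquiv_suppQuiver (β : Q.I → ℤ) :
    Nonempty (Q.InvRing K l (fun i => (β i).toNat) ≃ₐ[K]
      (Q.suppQuiver β).InvRing K (fun i => l i.1) fun i => (β i.1).toNat) := by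
  let e : (Σ i : (Q.suppQuiver β).I, Fin (β i.1).toNat) ≃ Σ i, Fin (β i).toNat :=
    { toFun := fun p => ⟨p.1.1, p.2⟩
      invFun := fun p => ⟨⟨p.1, fun h => by simpa [h] using p.2.2⟩, p.2⟩
      left_inv := fun _ => rfl
      right_inv := fun _ => rfl }
  obtain ⟨φ₁⟩ := nonempty_invRing_algEquiv_totalInvRing l fun i => (β i).toNat
  obtain ⟨φ₂⟩ := nonempty_totalInvRing_algEquiv_comp l Sigma.fst e
  obtain ⟨φ₃⟩ := nonempty_totalInvRing_algEquiv_suppQuiver (β := β) l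
    (Sigma.fst : (Σ i : (Q.suppQuiver β).I, Fin (β i.1).toNat) → _)
  obtain ⟨φ₄⟩ := nonempty_invRing_algEquiv_totalInvRing (Q := Q.suppQuiver β) (fun i => l i.1)
    fun i => (β i.1).toNat
  exact ⟨φ₁.trans (φ₂.trans (φ₃.trans φ₄.symm))⟩

end SupportQuiver

end FinQuiver

section BlockMatrices

open scoped Kronecker

variable {K D I T U V : Type*} [CommRing K] {π : T → I} {i : I}

theorem IsHomogeneousMatrix.eq_fromBlocks_diagonal (hπ : ∀ p, π p ≠ i)
    {g : Matrix (T ⊕ U) (T ⊕ U) K} (hg : IsHomogeneousMatrix (Sum.elim π fun _ => i) g) :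
    g = Matrix.fromBlocks g.toBlocks₁₁ 0 0 g.toBlocks₂₂ := by
  ext (p | k) (q | k')
  · rfl
  · exact not_imp_comm.1 (hg _ _) (hπ p)
  · exact not_imp_comm.1 (hg _ _) (hπ q).symm
  · rfl

theorem IsHomogeneousMatrix.fromBlocks_diagonal {g : Matrix T T K} (hg : IsHomogeneousMatrix π g)
    (h : Matrix U U K) :
    IsHomogeneousMatrix (Sum.elim π fun _ => i) (Matrix.fromBlocks g 0 0 h) := by
  rintro (p | k) (q | k') hpq
  · exact hg p q hpq
  · exact absurd rfl hpq
  · exact absurd rfl hpq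
  · rfl

variable [Fintype T]

theorem fromBlocks_diagonal_conj [Fintype U] (g g' : Matrix T T K) (h h' : Matrix U U K)
    (V : Matrix (T ⊕ U) (T ⊕ U) K) :
    Matrix.fromBlocks g 0 0 h * V * Matrix.fromBlocks g' 0 0 h' =
      Matrix.fromBlocks (g * V.toBlocks₁₁ * g') (g * V.toBlocks₁₂ * h') (h * V.toBlocks₂₁ * g')
        (h * V.toBlocks₂₂ * h') := by
  conv_lhs => rw [← Matrix.fromBlocks_toBlocks V]
  simp [Matrix.fromBlocks_multiply]

variable [Fintype D] [DecidableEq D]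

theorem one_kronecker_mul_apply (g : Matrix T T K) (P : Matrix (D × T) V K)
    (b : D) (p : T) (k : V) :
    (((1 : Matrix D D K) ⊗ₖ g) * P) (b, p) k = ∑ q, g p q * P (b, q) k := by
  simp [Matrix.mul_apply, Fintype.sum_prod_type, Matrix.one_apply]

theorem mul_one_kronecker_apply (g : Matrix T T K) (P : Matrix V (D × T) K)
    (b : D) (p : T) (k : V) :
    (P * ((1 : Matrix D D K) ⊗ₖ g)) k (b, p) = ∑ q, P k (b, q) * g q p := by
  simp [Matrix.mul_apply, Fintype.sum_prod_type, Matrix.one_apply]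

end BlockMatrices

namespace FinQuiver

section ReflectionData

open scoped Kronecker

variable {Q : FinQuiver} {K T U : Type} [Field K]

/-- The partial trace, over the arrows, of an endomorphism of copies of one space indexed by the
arrows. -/
def partialTrace : Matrix (Q.DA × T) (Q.DA × T) K →ₗ[K] Matrix T T K where
  toFun P := Matrix.of fun p q => ∑ b, P (b, p) (b, q)
  map_add' _ _ := Matrix.ext fun _ _ => Finset.sum_add_distrib
  map_smul' _ _ := Matrix.ext fun _ _ => (Finset.mul_sum ..).symm

theorem partialTrace_apply (P : Matrix (Q.DA × T) (Q.DA × T) K) (p q : T) :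
    partialTrace P p q = ∑ b, P (b, p) (b, q) :=
  rfl

variable (Q K) in
/-- The sign with which an arrow `b` contributes `x_b x_{b*}` to the moment map. -/
def arrowSign : Q.DA → K :=
  Sum.elim 1 (-1)

/-- The joint map from the space with basis `U` to copies of the space with basis `T`, one for each
arrow. -/
def outMap (M : Q.DA → Matrix (T ⊕ U) (T ⊕ U) K) : Matrix (Q.DA × T) U K :=
  Matrix.of fun p k => (M p.1).toBlocks₁₂ p.2 k

/-- The joint map to the space with basis `U` from copies of the space with basis `T`, one for each
arrow, the copy indexed by `b` being acted on by the reverse of `b`. The signs are those which make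
`inMap M * outMap M` a component of the moment map. -/
def inMap (M : Q.DA → Matrix (T ⊕ U) (T ⊕ U) K) : Matrix U (Q.DA × T) K :=
  Matrix.of fun k p => arrowSign Q K p.1.swap * (M p.1.swap).toBlocks₂₁ k p.2

/-- The representation with the given action on the space with basis `T` and the given joint
maps. -/
def ofParts (N : Q.DA → Matrix T T K) (A : Matrix (Q.DA × T) U K) (B : Matrix U (Q.DA × T) K)
    (b : Q.DA) : Matrix (T ⊕ U) (T ⊕ U) K :=
  Matrix.fromBlocks (N b) (Matrix.of fun p k => A (b, p) k)
    (Matrix.of fun k q => arrowSign Q K b * B k (b.swap, q)) 0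

theorem arrowSign_mul_self (b : Q.DA) : arrowSign Q K b * arrowSign Q K b = 1 := by
  cases b <;> simp [arrowSign]

theorem outMap_ofParts (N : Q.DA → Matrix T T K) (A : Matrix (Q.DA × T) U K)
    (B : Matrix U (Q.DA × T) K) : outMap (ofParts N A B) = A :=
  rfl

theorem inMap_ofParts (N : Q.DA → Matrix T T K) (A : Matrix (Q.DA × T) U K)
    (B : Matrix U (Q.DA × T) K) : inMap (ofParts N A B) = B := by
  ext k p
  simp [inMap, ofParts, ← mul_assoc, arrowSign_mul_self]

theorem toBlocks₂₁_eq_arrowSign_mul_inMap (M : Q.DA → Matrix (T ⊕ U) (T ⊕ U) K) (b : Q.DA) (k : U)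
    (p : T) : (M b).toBlocks₂₁ k p = arrowSign Q K b * inMap M k (b.swap, p) := by
  simp [inMap, ← mul_assoc, arrowSign_mul_self]

section Moment

variable [Fintype T] [Fintype U] {M : Q.DA → Matrix (T ⊕ U) (T ⊕ U) K}

theorem toBlocks₁₁_totalMoment (M : Q.DA → Matrix (T ⊕ U) (T ⊕ U) K) :
    (Q.totalMoment M).toBlocks₁₁ = Q.totalMoment (fun b => (M b).toBlocks₁₁) -
      partialTrace (outMap M * inMap M) := by
  ext p q
  simp only [Matrix.toBlocks₁₁, totalMoment, Matrix.sum_apply, Matrix.sub_apply, Matrix.mul_apply,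
    Fintype.sum_sum_type, Finset.sum_sub_distrib, Finset.sum_add_distrib, Matrix.of_apply, outMap,
    Matrix.toBlocks₁₂, inMap, arrowSign, Matrix.toBlocks₂₁, partialTrace_apply, Sum.swap_inl,
    Sum.elim_inr, Pi.neg_apply, Pi.one_apply, neg_mul, one_mul, mul_neg, Finset.sum_neg_distrib,
    Sum.swap_inr, Sum.elim_inl]
  ring

theorem toBlocks₂₂_totalMoment (hM : ∀ b, (M b).toBlocks₂₂ = 0) :
    (Q.totalMoment M).toBlocks₂₂ = inMap M * outMap M := by
  have h22 (b : Q.DA) (k k' : U) : M b (Sum.inr k) (Sum.inr k') = 0 := congrFun₂ (hM b) k k'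
  ext k k'
  simp only [Matrix.toBlocks₂₂, totalMoment, Matrix.sum_apply, Matrix.sub_apply, Matrix.mul_apply,
    Fintype.sum_sum_type, h22, mul_zero, Finset.sum_const_zero, add_zero, Finset.sum_sub_distrib,
    Matrix.of_apply, inMap, arrowSign, Matrix.toBlocks₂₁, outMap, Matrix.toBlocks₁₂,
    Fintype.sum_prod_type, Sum.swap_inl, Sum.elim_inr, Pi.neg_apply, Pi.one_apply, neg_mul,
    one_mul, Finset.sum_neg_distrib, Sum.swap_inr, Sum.elim_inl]
  ring

end Moment

section Conjugation

variable [Fintype T] [Fintype U] [DecidableEq Q.A]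

variable (M : Q.DA → Matrix (T ⊕ U) (T ⊕ U) K) (g g' : Matrix T T K) (h h' : Matrix U U K)

theorem outMap_conj :
    outMap (fun b => Matrix.fromBlocks g 0 0 h * M b * Matrix.fromBlocks g' 0 0 h') =
      ((1 : Matrix Q.DA Q.DA K) ⊗ₖ g) * outMap M * h' := by
  ext ⟨b, p⟩ k
  simp_rw [outMap, fromBlocks_diagonal_conj, Matrix.of_apply, Matrix.toBlocks_fromBlocks₁₂]
  rw [Matrix.mul_apply, Matrix.mul_apply]
  exact Finset.sum_congr rfl fun k' _ => by rw [one_kronecker_mul_apply]; rfl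

theorem inMap_conj :
    inMap (fun b => Matrix.fromBlocks g 0 0 h * M b * Matrix.fromBlocks g' 0 0 h') =
      h * inMap M * ((1 : Matrix Q.DA Q.DA K) ⊗ₖ g') := by
  ext k ⟨b, p⟩
  simp_rw [inMap, fromBlocks_diagonal_conj, Matrix.of_apply, Matrix.toBlocks_fromBlocks₂₁,
    mul_one_kronecker_apply, Matrix.mul_apply, Matrix.of_apply, Finset.mul_sum, Finset.sum_mul,
    Finset.mul_sum]
  exact Finset.sum_congr rfl fun q _ => Finset.sum_congr rfl fun k' _ => by ring

end Conjugation

section Grading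

variable {i : Q.I} {π : T → Q.I} {M : Q.DA → Matrix (T ⊕ U) (T ⊕ U) K}

theorem IsGradedRep.toBlocks₁₁ (hM : Q.IsGradedRep (Sum.elim π fun _ => i) M) :
    Q.IsGradedRep π fun b => (M b).toBlocks₁₁ :=
  fun b p q hpq => hM b (Sum.inl p) (Sum.inl q) hpq

theorem IsGradedRep.toBlocks₂₂_eq_zero (hi : Q.Loopfree i)
    (hM : Q.IsGradedRep (Sum.elim π fun _ => i) M) (b : Q.DA) : (M b).toBlocks₂₂ = 0 := by
  ext k k'
  refine not_imp_comm.1 (hM b (Sum.inr k) (Sum.inr k')) fun h => ?_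
  exact hi.dh_ne h.2.symm h.1.symm

section Fiber

variable [Fintype T] [DecidableEq T] [Fintype U] [DecidableEq U]

theorem gradedConj_sumElim_iff (hπ : ∀ p, π p ≠ i) {M M' : Q.DA → Matrix (T ⊕ U) (T ⊕ U) K} :
    GradedConj (Sum.elim π fun _ => i) M M' ↔
      ∃ g g' : Matrix T T K, ∃ h h' : Matrix U U K, g * g' = 1 ∧ h * h' = 1 ∧
        IsHomogeneousMatrix π g ∧ IsHomogeneousMatrix π g' ∧
        M' = fun b => Matrix.fromBlocks g 0 0 h * M b * Matrix.fromBlocks g' 0 0 h' := by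
  constructor
  · rintro ⟨g, g', hgg', hg, hg', hM⟩
    rw [hg.eq_fromBlocks_diagonal hπ, hg'.eq_fromBlocks_diagonal hπ, Matrix.fromBlocks_multiply,
      ← Matrix.fromBlocks_one, Matrix.fromBlocks_inj] at hgg'
    refine ⟨g.toBlocks₁₁, g'.toBlocks₁₁, g.toBlocks₂₂, g'.toBlocks₂₂, by simpa using hgg'.1,
      by simpa using hgg'.2.2.2, fun p q => hg (Sum.inl p) (Sum.inl q),
      fun p q => hg' (Sum.inl p) (Sum.inl q), funext fun b => ?_⟩
    rw [← hg.eq_fromBlocks_diagonal hπ, ← hg'.eq_fromBlocks_diagonal hπ, hM]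
  · rintro ⟨g, g', h, h', hgg', hhh', hg, hg', rfl⟩
    exact ⟨_, _, by simp [Matrix.fromBlocks_multiply, hgg', hhh'], hg.fromBlocks_diagonal h,
      hg'.fromBlocks_diagonal h', fun _ => rfl⟩

theorem IsGradedRep.mem_totalFiber_sumElim_iff (hi : Q.Loopfree i) (hπ : ∀ p, π p ≠ i)
    {l : Q.I → K} (hM : Q.IsGradedRep (Sum.elim π fun _ => i) M) :
    M ∈ Q.TotalFiber l (Sum.elim π fun _ => i) ↔
      Q.totalMoment (fun b => (M b).toBlocks₁₁) - partialTrace (outMap M * inMap M) =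
          Matrix.diagonal (fun p => l (π p)) ∧
        inMap M * outMap M = l i • 1 := by
  have hdiag : (Matrix.diagonal fun p => l (Sum.elim π (fun _ => i) p)) =
      Matrix.fromBlocks (Matrix.diagonal fun p => l (π p)) 0 0 (l i • (1 : Matrix U U K)) := by
    rw [Matrix.smul_one_eq_diagonal, Matrix.fromBlocks_diagonal]
    exact congrArg _ (funext fun p => by cases p <;> rfl)
  rw [← toBlocks₁₁_totalMoment, ← toBlocks₂₂_totalMoment (hM.toBlocks₂₂_eq_zero hi)]
  refine (and_iff_right hM).trans ?_
  rw [hM.isHomogeneousMatrix_totalMoment.eq_fromBlocks_diagonal hπ, hdiag, Matrix.fromBlocks_inj]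
  simp

end Fiber

section ArrowProj

variable [DecidableEq Q.A] [DecidableEq T]

variable (K) in
/-- The projection of the copies of the space with basis `T`, graded by `π`, onto the sum of the
spaces at the heads of the arrows with tail `i`. -/
def arrowProj (i : Q.I) (π : T → Q.I) : Matrix (Q.DA × T) (Q.DA × T) K :=
  Matrix.diagonal fun p => if Q.dt p.1 = i ∧ π p.2 = Q.dh p.1 then 1 else 0

theorem partialTrace_arrowProj (i : Q.I) (π : T → Q.I) :
    partialTrace (arrowProj K i π) =
      Matrix.diagonal fun p => ∑ b : Q.DA, if Q.dt b = i ∧ π p = Q.dh b then 1 else 0 := by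
  ext p q
  by_cases hpq : p = q
  · simp only [partialTrace_apply, arrowProj, hpq, Matrix.diagonal_apply_eq]
  · simp [partialTrace_apply, arrowProj, hpq]

theorem commute_one_kronecker_arrowProj [Fintype T] {g : Matrix T T K}
    (hg : IsHomogeneousMatrix π g) :
    Commute ((1 : Matrix Q.DA Q.DA K) ⊗ₖ g) (arrowProj K i π) := by
  ext ⟨b, p⟩ ⟨b', q⟩
  rw [arrowProj, Matrix.mul_diagonal, Matrix.diagonal_mul, Matrix.kronecker_apply, mul_comm]
  by_cases hb : b = b'
  · by_cases h : g p q = 0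
    · simp [h]
    · rw [hb, hg p q h]
  · simp [Matrix.one_apply_ne hb]

variable [Fintype T]

theorem IsGradedRep.arrowProj_mul_outMap (hM : Q.IsGradedRep (Sum.elim π fun _ => i) M) :
    arrowProj K i π * outMap M = outMap M := by
  ext ⟨b, p⟩ k
  rw [arrowProj, Matrix.diagonal_mul]
  split_ifs with h
  · exact one_mul _
  · rw [zero_mul]
    exact (not_imp_comm.1 (hM b (Sum.inl p) (Sum.inr k)) fun hb => h ⟨hb.2.symm, hb.1⟩).symm

theorem IsGradedRep.inMap_mul_arrowProj (hM : Q.IsGradedRep (Sum.elim π fun _ => i) M) :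
    inMap M * arrowProj K i π = inMap M := by
  ext k ⟨b, p⟩
  rw [arrowProj, Matrix.mul_diagonal]
  split_ifs with h
  · exact mul_one _
  · have h0 := not_imp_comm.1 (hM b.swap (Sum.inr k) (Sum.inl p)) fun hb => h (by
      cases b <;> exact ⟨hb.1.symm, hb.2⟩)
    rw [mul_zero, inMap, Matrix.of_apply, Matrix.toBlocks₂₁, Matrix.of_apply, h0, mul_zero]

theorem isGradedRep_ofParts {N : Q.DA → Matrix T T K} {A : Matrix (Q.DA × T) U K}
    {B : Matrix U (Q.DA × T) K} (hN : Q.IsGradedRep π N) (hA : arrowProj K i π * A = A)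
    (hB : B * arrowProj K i π = B) : Q.IsGradedRep (Sum.elim π fun _ => i) (ofParts N A B) := by
  have hproj (p : Q.DA × T) {x : K}
      (hx : (if Q.dt p.1 = i ∧ π p.2 = Q.dh p.1 then 1 else 0) * x ≠ 0) :
      Q.dt p.1 = i ∧ π p.2 = Q.dh p.1 := by
    by_contra h
    exact hx (by rw [if_neg h, zero_mul])
  rintro b (p | k) (q | k') h
  · exact hN b p q h
  · rw [← hA, arrowProj] at h
    simp only [ofParts, Matrix.fromBlocks_apply₁₂, Matrix.of_apply, Matrix.diagonal_mul] at h
    have := hproj (b, p) h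
    exact ⟨this.2, this.1.symm⟩
  · rw [← hB, arrowProj] at h
    simp only [ofParts, Matrix.fromBlocks_apply₂₁, Matrix.of_apply, Matrix.mul_diagonal] at h
    have := hproj (b.swap, q) (mul_comm (B k _) _ ▸ right_ne_zero_of_mul h)
    cases b <;> exact ⟨this.1.symm, this.2⟩
  · exact absurd rfl h

end ArrowProj

end Grading

end ReflectionData

end FinQuiver

section ComplementaryFactorization

variable {K : Type*} [Field K]

theorem exists_mul_eq_one_mul_eq_diagonal {D : Type*} [Fintype D] [DecidableEq D] (s : D → Prop)
    [DecidablePred s] : ∃ (J : Matrix D {d // s d} K) (J' : Matrix {d // s d} D K),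
      J' * J = 1 ∧ J * J' = Matrix.diagonal fun d => if s d then 1 else 0 := by
  refine ⟨(1 : Matrix D D K).submatrix id Subtype.val, (1 : Matrix D D K).submatrix Subtype.val id,
    ?_, ?_⟩
  · rw [← Matrix.submatrix_mul _ _ _ _ _ Function.bijective_id, Matrix.one_mul,
      Matrix.submatrix_one _ Subtype.val_injective]
  · ext d d'
    change ∑ t : {d // s d}, (1 : Matrix D D K) d t * (1 : Matrix D D K) t d' = _
    by_cases hd : s d
    · rw [Fintype.sum_eq_single ⟨d, hd⟩ fun t ht => by
        rw [Matrix.one_apply_ne fun h => ht (Subtype.ext h.symm), zero_mul]]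
      simp [Matrix.one_apply, Matrix.diagonal_apply, hd]
    · rw [Finset.sum_eq_zero fun t _ => by
        rw [Matrix.one_apply_ne fun h : d = t => hd (h ▸ t.2), zero_mul]]
      simp [Matrix.diagonal_apply, hd]

theorem exists_complementary_factorization_diagonal {D n : Type*} [Fintype D] [DecidableEq D]
    [Fintype n] [DecidableEq n] {s : D → Prop} [DecidablePred s] {r : ℕ}
    (hr : Fintype.card {d // s d} = Fintype.card n + r) {c : K} (hc : c ≠ 0)
    {A : Matrix D n K} {B : Matrix n D K} {P : Matrix D D K}
    (hP : P = Matrix.diagonal fun d => if s d then 1 else 0)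
    (hA : P * A = A) (hB : B * P = B) (hBA : B * A = c • 1) :
    ∃ (A' : Matrix D (Fin r) K) (B' : Matrix (Fin r) D K),
      P * A' = A' ∧ B' * P = B' ∧ B' * A' = (-c) • 1 ∧ A' * B' = A * B - c • P := by
  obtain ⟨J, J', hJ'J, hJJ'⟩ := exists_mul_eq_one_mul_eq_diagonal (K := K) s
  rw [← hP] at hJJ'
  have hPJ : P * J = J := by rw [← hJJ', Matrix.mul_assoc, hJ'J, Matrix.mul_one]
  have hJ'P : J' * P = J' := by rw [← hJJ', ← Matrix.mul_assoc, hJ'J, Matrix.one_mul]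
  obtain ⟨A₀, B₀, hBA₀, hAB₀⟩ := exists_complementary_factorization hr hc
    (A := J' * A) (B := B * J) (by
      rw [Matrix.mul_assoc, ← Matrix.mul_assoc J, hJJ', hA, hBA])
  refine ⟨J * A₀, B₀ * J', ?_, ?_, ?_, ?_⟩
  · rw [← Matrix.mul_assoc, hPJ]
  · rw [Matrix.mul_assoc, hJ'P]
  · rw [Matrix.mul_assoc, ← Matrix.mul_assoc J', hJ'J, Matrix.one_mul, hBA₀]
  · calc J * A₀ * (B₀ * J') = J * (A₀ * B₀) * J' := by simp only [Matrix.mul_assoc]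
      _ = (P * A) * (B * P) - c • P := by
        rw [hAB₀, ← hJJ', Matrix.mul_sub, Matrix.sub_mul, Matrix.mul_smul, Matrix.mul_one,
          Matrix.smul_mul]
        simp only [Matrix.mul_assoc]
      _ = A * B - c • P := by rw [hA, hB]

end ComplementaryFactorization

namespace FinQuiver

section VertexInvariants

variable {Q : FinQuiver} {K T U : Type} [Field K] [Fintype T] [DecidableEq T] [Fintype U]
  [DecidableEq U] {i : Q.I} {π : T → Q.I} {l : Q.I → K}

/-- The entries of the restriction of a representation to the space with basis `T`, as functions on
the fibre of the moment map. -/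
def baseCoords (l : Q.I → K) (i : Q.I) (π : T → Q.I) (U : Type) [Fintype U] [DecidableEq U] :
    Set (Q.TotalFiber l (Sum.elim π fun _ : U => i) → K) :=
  Set.range fun (c : Q.DA × T × T) x => (x.1 c.1).toBlocks₁₁ c.2.1 c.2.2

theorem adjoin_totalCoords_le (hi : Q.Loopfree i) :
    Algebra.adjoin K (Q.totalCoords l (Sum.elim π fun _ : U => i)) ≤
      Algebra.adjoin K (baseCoords l i π U ∪
        (entryFunctions (fun x => outMap x.1) ∪ entryFunctions fun x => inMap x.1)) := by
  refine Algebra.adjoin_le ?_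
  rintro _ ⟨⟨b, p | k, q | k'⟩, rfl⟩ <;> beta_reduce <;> rw [SetLike.mem_coe]
  · exact Algebra.subset_adjoin (Or.inl ⟨(b, p, q), rfl⟩)
  · exact Algebra.subset_adjoin (Or.inr (Or.inl ⟨((b, p), k'), rfl⟩))
  · have hin : (fun x => inMap x.1 k (b.swap, q)) ∈
        entryFunctions fun x : Q.TotalFiber l (Sum.elim π fun _ : U => i) => inMap x.1 :=
      ⟨(k, (b.swap, q)), rfl⟩
    have hsmul : (fun x : Q.TotalFiber l (Sum.elim π fun _ : U => i) => x.1 b (.inr k) (.inl q)) =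
        arrowSign Q K b • fun x => inMap x.1 k (b.swap, q) :=
      funext fun x => toBlocks₂₁_eq_arrowSign_mul_inMap x.1 b k q
    rw [hsmul]
    refine Subalgebra.smul_mem _ ?_ _
    exact Algebra.subset_adjoin (Or.inr (Or.inr hin))
  · have hzero : (fun x : Q.TotalFiber l (Sum.elim π fun _ : U => i) =>
        x.1 b (.inr k) (.inr k')) = 0 :=
      funext fun x => congrFun₂ (x.2.1.toBlocks₂₂_eq_zero hi b) k k'
    exact hzero ▸ Subalgebra.zero_mem _

theorem exists_isTranslate (hπ : ∀ p, π p ≠ i) (x : Q.TotalFiber l (Sum.elim π fun _ : U => i))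
    {g : Matrix U U K} (hg : g.det ≠ 0) :
    ∃ y : Q.TotalFiber l (Sum.elim π fun _ : U => i),
      IsTranslate (baseCoords l i π U) (fun x => outMap x.1) (fun x => inMap x.1) g x y ∧
        GradedConj (Sum.elim π fun _ => i) x.1 y.1 := by
  classical
  have hgg : g * g⁻¹ = 1 := Matrix.mul_nonsing_inv g hg.isUnit
  have h1 : IsHomogeneousMatrix π (1 : Matrix T T K) :=
    Matrix.diagonal_one (n := T) (α := K) ▸ isHomogeneousMatrix_diagonal π 1
  have hconj : GradedConj (Sum.elim π fun _ => i) x.1 _ :=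
    (gradedConj_sumElim_iff hπ).2 ⟨1, 1, g, g⁻¹, mul_one 1, hgg, h1, h1, rfl⟩
  refine ⟨⟨_, hconj.mem_totalFiber x.2⟩, ⟨?_, ?_, ?_⟩, hconj⟩
  · rintro _ ⟨c, rfl⟩
    simp only [fromBlocks_diagonal_conj, Matrix.toBlocks_fromBlocks₁₁, Matrix.one_mul,
      Matrix.mul_one]
  · rw [outMap_conj, Matrix.one_kronecker_one, Matrix.one_mul, Matrix.mul_assoc,
      mul_eq_one_comm.1 hgg, Matrix.mul_one]
  · rw [inMap_conj, Matrix.one_kronecker_one, Matrix.mul_one]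

theorem mem_adjoin_outMap_mul_inMap [CharZero K] (hi : Q.Loopfree i) (hπ : ∀ p, π p ≠ i)
    (hl : l i ≠ 0) {f : Q.TotalFiber l (Sum.elim π fun _ : U => i) → K}
    (hf : f ∈ Q.TotalInvRing l (Sum.elim π fun _ : U => i)) :
    f ∈ Algebra.adjoin K
      (baseCoords l i π U ∪ entryFunctions fun x => outMap x.1 * inMap x.1) := by
  refine mem_adjoin_entryFunctions_mul hl
    (fun x => ((x.2.1.mem_totalFiber_sumElim_iff hi hπ).1 x.2).2)
    (adjoin_totalCoords_le hi hf.1) fun x g hg => ?_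
  obtain ⟨y, hxy, hconj⟩ := exists_isTranslate hπ x hg
  exact ⟨y, hxy, (hf.2 x y hconj).symm⟩

end VertexInvariants

section ReflectionCorrespondence

open Relator
open scoped Kronecker

variable {Q : FinQuiver} {K T U U' : Type} [Field K] [DecidableEq Q.A] [DecidableEq T]
  [Fintype U] [Fintype U'] {i : Q.I} {π : T → Q.I} {l l' : Q.I → K} {c : K}

/-- Two representations are complementary at the vertex `i`, at which their spaces have bases `U`
and `U'`, when they agree away from `i` and the composites of their joint maps through `i` differ
by the scalar `c` on the sum of the spaces of the neighbours of `i`. -/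
structure IsComplementaryAt (i : Q.I) (π : T → Q.I) (c : K)
    (M : Q.DA → Matrix (T ⊕ U) (T ⊕ U) K) (M' : Q.DA → Matrix (T ⊕ U') (T ⊕ U') K) : Prop where
  toBlocks₁₁_eq : ∀ b, (M' b).toBlocks₁₁ = (M b).toBlocks₁₁
  outMap_mul_inMap : outMap M' * inMap M' = outMap M * inMap M - c • arrowProj K i π

variable {M : Q.DA → Matrix (T ⊕ U) (T ⊕ U) K} {M' : Q.DA → Matrix (T ⊕ U') (T ⊕ U') K}

theorem IsComplementaryAt.symm (h : IsComplementaryAt i π c M M') :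
    IsComplementaryAt i π (-c) M' M where
  toBlocks₁₁_eq b := (h.toBlocks₁₁_eq b).symm
  outMap_mul_inMap := by rw [h.outMap_mul_inMap, neg_smul, sub_neg_eq_add, sub_add_cancel]

theorem isComplementaryAt_coRefl_comm (hi : Q.Loopfree i) :
    IsComplementaryAt i π (Q.coRefl K i l i) M' M ↔ IsComplementaryAt i π (l i) M M' := by
  rw [coRefl_apply_self hi]
  exact ⟨fun h => neg_neg (l i) ▸ h.symm, fun h => h.symm⟩

theorem diagonal_coRefl (hπ : ∀ p, π p ≠ i) (l : Q.I → K) :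
    Matrix.diagonal (fun p => Q.coRefl K i l (π p)) =
      Matrix.diagonal (fun p => l (π p)) + l i • partialTrace (arrowProj K i π) := by
  rw [partialTrace_arrowProj, ← Matrix.diagonal_smul, Matrix.diagonal_add]
  refine congrArg _ (funext fun p => ?_)
  have hev : Q.ev (π p) i = 0 := if_neg (hπ p).symm
  rw [coRefl, bil_comm, bil_ev, hev, Pi.smul_apply, smul_eq_mul]
  simp only [ev, ite_and, eq_comm (a := π p), Int.cast_sub, Int.cast_sum,
    apply_ite (Int.cast (R := K)), Int.cast_zero, Int.cast_one, mul_zero]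
  ring

variable [Fintype T] [DecidableEq U] [DecidableEq U']

theorem mem_totalFiber_coRefl (hi : Q.Loopfree i) (hπ : ∀ p, π p ≠ i)
    (hM : M ∈ Q.TotalFiber l (Sum.elim π fun _ => i))
    (hM' : Q.IsGradedRep (Sum.elim π fun _ => i) M') (h : IsComplementaryAt i π (l i) M M')
    (hio : inMap M' * outMap M' = (-l i) • 1) :
    M' ∈ Q.TotalFiber (Q.coRefl K i l) (Sum.elim π fun _ => i) := by
  refine (hM'.mem_totalFiber_sumElim_iff hi hπ).2 ⟨?_, by rw [hio, coRefl_apply_self hi]⟩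
  rw [funext h.toBlocks₁₁_eq, h.outMap_mul_inMap, diagonal_coRefl hπ,
    ← ((hM.1.mem_totalFiber_sumElim_iff hi hπ).1 hM).1, map_sub, map_smul]
  abel

theorem exists_isComplementaryAt (hi : Q.Loopfree i) (hπ : ∀ p, π p ≠ i) (hl : l i ≠ 0) {r : ℕ}
    (hr : Fintype.card {p : Q.DA × T // Q.dt p.1 = i ∧ π p.2 = Q.dh p.1} = Fintype.card U + r)
    (hM : M ∈ Q.TotalFiber l (Sum.elim π fun _ => i)) :
    ∃ M' : Q.DA → Matrix (T ⊕ Fin r) (T ⊕ Fin r) K,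
      M' ∈ Q.TotalFiber (Q.coRefl K i l) (Sum.elim π fun _ => i) ∧
        IsComplementaryAt i π (l i) M M' := by
  obtain ⟨A, B, hA, hB, hBA, hAB⟩ := exists_complementary_factorization_diagonal hr hl rfl
    hM.1.arrowProj_mul_outMap hM.1.inMap_mul_arrowProj
    ((hM.1.mem_totalFiber_sumElim_iff hi hπ).1 hM).2
  let N b := (M b).toBlocks₁₁
  have h : IsComplementaryAt i π (l i) M (ofParts N A B) :=
    ⟨fun b => rfl, by rw [outMap_ofParts, inMap_ofParts, hAB]; rfl⟩
  refine ⟨ofParts N A B, mem_totalFiber_coRefl hi hπ hM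
    (isGradedRep_ofParts hM.1.toBlocks₁₁ hA hB) h ?_, h⟩
  rw [outMap_ofParts, inMap_ofParts, hBA]

theorem IsComplementaryAt.exists_gradedConj (hπ : ∀ p, π p ≠ i)
    (h : IsComplementaryAt i π c M M') {M₁ : Q.DA → Matrix (T ⊕ U) (T ⊕ U) K}
    (hM₁ : GradedConj (Sum.elim π fun _ => i) M M₁) :
    ∃ M₁', GradedConj (Sum.elim π fun _ => i) M' M₁' ∧ IsComplementaryAt i π c M₁ M₁' := by
  obtain ⟨g, g', k, k', hgg', hkk', hg, hg', rfl⟩ := (gradedConj_sumElim_iff hπ).1 hM₁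
  refine ⟨_, (gradedConj_sumElim_iff hπ).2
    ⟨g, g', 1, 1, hgg', mul_one 1, hg, hg', rfl⟩, fun b => ?_, ?_⟩
  · simp only [fromBlocks_diagonal_conj, Matrix.toBlocks_fromBlocks₁₁, h.toBlocks₁₁_eq]
  · have hE : ((1 : Matrix Q.DA Q.DA K) ⊗ₖ g) * arrowProj K i π *
        ((1 : Matrix Q.DA Q.DA K) ⊗ₖ g') = arrowProj K i π := by
      rw [(commute_one_kronecker_arrowProj hg).eq, Matrix.mul_assoc, ← Matrix.mul_kronecker_mul,
        hgg', Matrix.one_mul, Matrix.one_kronecker_one, Matrix.mul_one]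
    have hconj {V : Type} [Fintype V] [DecidableEq V] (M : Q.DA → Matrix (T ⊕ V) (T ⊕ V) K)
        {k k' : Matrix V V K} (hk : k' * k = 1) :
        outMap (fun b => Matrix.fromBlocks g 0 0 k * M b * Matrix.fromBlocks g' 0 0 k') *
          inMap (fun b => Matrix.fromBlocks g 0 0 k * M b * Matrix.fromBlocks g' 0 0 k') =
        ((1 : Matrix Q.DA Q.DA K) ⊗ₖ g) * (outMap M * inMap M) *
          ((1 : Matrix Q.DA Q.DA K) ⊗ₖ g') := by
      rw [outMap_conj, inMap_conj, Matrix.mul_assoc _ k', Matrix.mul_assoc k,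
        ← Matrix.mul_assoc k', hk, Matrix.one_mul]
      simp only [Matrix.mul_assoc]
    rw [hconj M' (mul_one 1), hconj M (mul_eq_one_comm.1 hkk'), h.outMap_mul_inMap,
      Matrix.mul_sub, Matrix.sub_mul, Matrix.mul_smul, Matrix.smul_mul, hE]

theorem exists_liftFun_isComplementaryAt [CharZero K] (hi : Q.Loopfree i) (hπ : ∀ p, π p ≠ i)
    (hl : l i ≠ 0) {f : Q.TotalFiber l (Sum.elim π fun _ : U => i) → K}
    (hf : f ∈ Q.TotalInvRing l (Sum.elim π fun _ : U => i)) :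
    ∃ f' ∈ Algebra.adjoin K (Q.totalCoords l' (Sum.elim π fun _ : U' => i)),
      ((fun x y => IsComplementaryAt i π c x.1 y.1) ⇒ Eq) f f' := by
  refine exists_liftFun_of_mem_adjoin ?_ (mem_adjoin_outMap_mul_inMap hi hπ hl hf)
  have hmem (b p q) : (fun y => y.1 b p q) ∈
      Algebra.adjoin K (Q.totalCoords l' (Sum.elim π fun _ : U' => i)) :=
    Algebra.subset_adjoin ⟨(b, p, q), rfl⟩
  rintro _ (⟨⟨b, p, q⟩, rfl⟩ | ⟨⟨p, q⟩, rfl⟩)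
  · exact ⟨_, hmem b (Sum.inl p) (Sum.inl q), fun x y hxy =>
      (congrFun₂ (hxy.toBlocks₁₁_eq b) p q).symm⟩
  · have hout (p k) : (fun y => outMap y.1 p k) ∈
        Algebra.adjoin K (Q.totalCoords l' (Sum.elim π fun _ : U' => i)) :=
      hmem p.1 (Sum.inl p.2) (Sum.inr k)
    have hin (k q) : (fun y => inMap y.1 k q) ∈
        Algebra.adjoin K (Q.totalCoords l' (Sum.elim π fun _ : U' => i)) :=
      Subalgebra.smul_mem _ (hmem q.1.swap (Sum.inr k) (Sum.inl q.2)) (arrowSign Q K q.1.swap)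
    refine ⟨_, Subalgebra.add_mem _ (mul_apply_mem hout hin p q)
      (Subalgebra.algebraMap_mem _ (c * arrowProj K i π p q)), fun x y hxy => ?_⟩
    have hpq := congrFun₂ hxy.outMap_mul_inMap p q
    rw [Matrix.sub_apply, Matrix.smul_apply, smul_eq_mul, eq_sub_iff_add_eq] at hpq
    exact hpq.symm

end ReflectionCorrespondence

theorem nonempty_totalInvRing_algEquiv_coRefl {Q : FinQuiver} {K T : Type} [Field K] [CharZero K]
    [Fintype T] [DecidableEq T] {i : Q.I} (hi : Q.Loopfree i) {π : T → Q.I} (hπ : ∀ p, π p ≠ i)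
    {l : Q.I → K} (hl : l i ≠ 0) {r r' : ℕ}
    (hr : Fintype.card {p : Q.DA × T // Q.dt p.1 = i ∧ π p.2 = Q.dh p.1} = r + r') :
    Nonempty (Q.TotalInvRing l (Sum.elim π fun _ : Fin r => i) ≃ₐ[K]
      Q.TotalInvRing (Q.coRefl K i l) (Sum.elim π fun _ : Fin r' => i)) := by
  classical
  have hl' : Q.coRefl K i l i ≠ 0 := by rwa [coRefl_apply_self hi, neg_ne_zero]
  have hleft (x : Q.TotalFiber l (Sum.elim π fun _ : Fin r => i)) :
      ∃ y : Q.TotalFiber (Q.coRefl K i l) (Sum.elim π fun _ : Fin r' => i),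
        IsComplementaryAt i π (l i) x.1 y.1 := by
    obtain ⟨y, hy, hxy⟩ := exists_isComplementaryAt hi hπ hl
      (hr.trans (by rw [Fintype.card_fin])) x.2
    exact ⟨⟨y, hy⟩, hxy⟩
  have hright (y : Q.TotalFiber (Q.coRefl K i l) (Sum.elim π fun _ : Fin r' => i)) :
      ∃ x : Q.TotalFiber l (Sum.elim π fun _ : Fin r => i),
        IsComplementaryAt i π (l i) x.1 y.1 := by
    obtain ⟨x, hx, hxy⟩ := exists_isComplementaryAt hi hπ hl'
      (hr.trans (by rw [Fintype.card_fin, add_comm])) y.2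
    rw [coRefl_coRefl hi] at hx
    exact ⟨⟨x, hx⟩, (isComplementaryAt_coRefl_comm hi).1 hxy⟩
  refine nonempty_algEquiv_inf_relInv (Γ := fun (x : Q.TotalFiber l _) (y : Q.TotalFiber _ _) =>
    IsComplementaryAt i π (l i) x.1 y.1)
    ⟨hleft, hright⟩ (fun f hf => exists_liftFun_isComplementaryAt hi hπ hl hf) (fun f hf => ?_)
    (fun x x' hx => ?_) fun y y' hy => ?_
  · obtain ⟨f', hf', hff'⟩ := exists_liftFun_isComplementaryAt (l' := l) (U' := Fin r)
      (c := Q.coRefl K i l i) hi hπ hl' hf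
    exact ⟨f', hf', fun x y hxy => (hff' ((isComplementaryAt_coRefl_comm hi).2 hxy)).symm⟩
  · obtain ⟨y, hxy⟩ := hleft x
    obtain ⟨y', hy, hxy'⟩ := hxy.exists_gradedConj hπ hx
    exact ⟨y, ⟨y', hy.mem_totalFiber y.2⟩, hxy, hxy', hy⟩
  · obtain ⟨x, hxy⟩ := hright y
    obtain ⟨x', hx, hxy'⟩ := ((isComplementaryAt_coRefl_comm hi).2 hxy).exists_gradedConj hπ hy
    exact ⟨x, ⟨x', hx.mem_totalFiber x.2⟩, hxy, (isComplementaryAt_coRefl_comm hi).1 hxy', hx⟩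

end FinQuiver

section SigmaSplit

variable {I : Type*} [DecidableEq I] {n : I → Type*}

/-- A disjoint union, with the summand of index `i` split off. -/
def sigmaNeSumEquiv (i : I) : (Σ j : {j // j ≠ i}, n j) ⊕ n i ≃ Σ j, n j where
  toFun := Sum.elim (fun p => ⟨p.1, p.2⟩) (Sigma.mk i)
  invFun p := if h : p.1 = i then Sum.inr (h ▸ p.2) else Sum.inl ⟨⟨p.1, h⟩, p.2⟩
  left_inv := by
    rintro (⟨⟨j, hj⟩, k⟩ | k)
    · simp [hj]
    · simp
  right_inv := by
    rintro ⟨j, k⟩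
    by_cases hj : j = i
    · subst hj
      simp
    · simp [hj]

end SigmaSplit

namespace FinQuiver

section ReflectionIsomorphism

variable {Q : FinQuiver} {K : Type} [Field K] {l : Q.I → K} {i : Q.I} {α α' : Q.I → ℕ}

theorem nonempty_invRing_algEquiv_sumElim (l : Q.I → K) (h : ∀ j ≠ i, α' j = α j) :
    Nonempty (Q.InvRing K l α' ≃ₐ[K]
      Q.TotalInvRing l
        (Sum.elim (fun p : Σ j : {j // j ≠ i}, Fin (α j) => p.1.1) fun _ : Fin (α' i) => i)) := by
  let e : (Σ j : {j // j ≠ i}, Fin (α j)) ⊕ Fin (α' i) ≃ Σ j, Fin (α' j) :=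
    ((Equiv.sigmaCongrRight fun j : {j // j ≠ i} => finCongr (h j j.2).symm).sumCongr
      (Equiv.refl _)).trans (sigmaNeSumEquiv (n := fun j => Fin (α' j)) i)
  have he : Sigma.fst ∘ e = Sum.elim (fun p => p.1.1) fun _ => i :=
    funext fun p => by cases p <;> rfl
  obtain ⟨φ⟩ := nonempty_invRing_algEquiv_totalInvRing l α'
  obtain ⟨ψ⟩ := nonempty_totalInvRing_algEquiv_comp l Sigma.fst e
  exact he ▸ ⟨φ.trans ψ⟩

theorem card_arrowsFrom (hi : Q.Loopfree i) (α : Q.I → ℕ) :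
    Fintype.card {p : Q.DA × Σ j : {j // j ≠ i}, Fin (α j) // Q.dt p.1 = i ∧ p.2.1 = Q.dh p.1} =
      ∑ b : Q.DA, if Q.dt b = i then α (Q.dh b) else 0 := by
  rw [Fintype.card_subtype, Finset.card_filter, Fintype.sum_prod_type]
  refine Finset.sum_congr rfl fun b _ => ?_
  rw [Fintype.sum_sigma]
  by_cases hb : Q.dt b = i
  · rw [Fintype.sum_eq_single ⟨Q.dh b, hi.dh_ne hb⟩ fun j hj =>
      Finset.sum_eq_zero fun k _ => if_neg fun h => hj (Subtype.ext h.2)]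
    simp [hb]
  · simp [hb]

theorem nonempty_invRing_algEquiv_refl [CharZero K] (hi : Q.Loopfree i) (hl : l i ≠ 0)
    (hα' : Q.toZ α' = Q.refl i (Q.toZ α)) :
    Nonempty (Q.InvRing K l α ≃ₐ[K] Q.InvRing K (Q.coRefl K i l) α') := by
  have hne (j) (hj : j ≠ i) : α' j = α j :=
    Int.ofNat_inj.1 ((congrFun hα' j).trans (refl_apply_of_ne hj _))
  have hsum : ∑ b : Q.DA, (if Q.dt b = i then α (Q.dh b) else 0) = α i + α' i := by
    have hi' := congrFun hα' i
    rw [refl_apply_self, bil_ev] at hi'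
    simp only [toZ] at hi'
    zify
    linarith
  obtain ⟨φ⟩ := nonempty_invRing_algEquiv_sumElim l (i := i) (α := α) fun _ _ => rfl
  obtain ⟨ψ⟩ := nonempty_totalInvRing_algEquiv_coRefl hi
    (π := fun p : Σ j : {j // j ≠ i}, Fin (α j) => p.1.1) (fun p => p.1.2) hl
    ((card_arrowsFrom hi α).trans hsum)
  obtain ⟨φ'⟩ := nonempty_invRing_algEquiv_sumElim (Q.coRefl K i l) hne
  exact ⟨φ.trans (ψ.trans φ'.symm)⟩

end ReflectionIsomorphism

section Reduction

variable {Q : FinQuiver} {K : Type} [Field K] {l : Q.I → K}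

theorem sum_refl (i : Q.I) (α : Q.I → ℤ) :
    ∑ j, Q.refl i α j = ∑ j, α j - Q.bil α (Q.ev i) := by
  simp [refl, ev]

theorem exists_toZ_eq {α : Q.I → ℤ} (hα : 0 ≤ α) : ∃ β : Q.I → ℕ, Q.toZ β = α :=
  ⟨fun i => (α i).toNat, funext fun i => Int.toNat_of_nonneg (hα i)⟩

theorem exists_admEquiv_bil_ev_nonpos [CharZero K] {β : Q.I → ℕ} (hβ : Q.toZ β ∈ Q.SigmaSet K l)
    (hiso : Q.pp (Q.toZ β) = 1) :
    ∃ (l' : Q.I → K) (β' : Q.I → ℕ), Q.AdmEquiv K (l, Q.toZ β) (l', Q.toZ β') ∧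
      Q.toZ β' ∈ Q.SigmaSet K l' ∧ Q.pp (Q.toZ β') = 1 ∧
      (∀ i, Q.bil (Q.toZ β') (Q.ev i) ≤ 0) ∧
      Nonempty (Q.InvRing K l β ≃ₐ[K] Q.InvRing K l' β') := by
  induction hn : ∑ i, β i using Nat.strong_induction_on generalizing l β with
  | _ n ih =>
    by_cases! hpos : ∃ i, 0 < Q.bil (Q.toZ β) (Q.ev i)
    · obtain ⟨i, hpos⟩ := hpos
      have hi : Q.Loopfree i := by
        by_contra hi
        exact hpos.not_ge (bil_ev_nonpos_of_not_loopfree hβ.1.1.2.1 hi)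
      have hl := apply_ne_zero_of_bil_ev_pos hi hβ (bil_self_eq_zero_iff.2 hiso) hpos
      have hmem := refl_mem_SigmaSet hi hl hβ
      obtain ⟨β₁, hβ₁⟩ := exists_toZ_eq hmem.1.1.2.1
      have hlt : ∑ j, β₁ j < n := by
        have hsum := sum_refl i (Q.toZ β)
        simp only [← hβ₁, toZ] at hsum hpos
        zify [← hn]
        linarith
      obtain ⟨l', β', hadm, hβ', hiso', hle, ⟨φ⟩⟩ :=
        ih _ hlt (hβ₁ ▸ hmem) (by rw [hβ₁, pp_refl hi, hiso]) rfl
      obtain ⟨ψ⟩ := nonempty_invRing_algEquiv_refl hi hl hβ₁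
      exact ⟨l', β', .trans _ _ _ (.rel _ _ ⟨i, hi, hl, rfl, hβ₁⟩) hadm, hβ', hiso', hle,
        ⟨ψ.trans φ⟩⟩
    · exact ⟨l, β, .refl _, hβ, hiso, hpos, ⟨AlgEquiv.refl⟩⟩

end Reduction

end FinQuiver

theorem stmt4_general (Q : FinQuiver) (K : Type) [Field K] [CharZero K]
    (l : Q.I → K) (β : Q.I → ℕ)
    (hβ : Q.toZ β ∈ Q.SigmaSet K l) (hiso : Q.pp (Q.toZ β) = 1) :
    ∃ (l' : Q.I → K) (β' : Q.I → ℤ),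
      Q.AdmEquiv K (l, Q.toZ β) (l', β') ∧ (∀ i, 0 ≤ β' i) ∧
      (Q.suppQuiver β').IsExtDynkin ∧
      (Q.suppQuiver β').IsMinImag (fun i => β' i.1) ∧
      Nonempty (Q.InvRing K l β ≃ₐ[K] Q.InvRing K l' (fun i => (β' i).toNat)) ∧
      Nonempty (Q.InvRing K l β ≃ₐ[K]
        (Q.suppQuiver β').InvRing K (fun i => l' i.1) (fun i => (β' i.1).toNat)) := by
  obtain ⟨l', β', hadm, hβ', hiso', hle, ⟨φ⟩⟩ := FinQuiver.exists_admEquiv_bil_ev_nonpos hβ hiso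
  obtain ⟨hdynkin, hmin⟩ := FinQuiver.isExtDynkin_and_isMinImag_suppQuiver hβ'
    (FinQuiver.bil_self_eq_zero_iff.2 hiso') hle
  obtain ⟨ψ⟩ := FinQuiver.nonempty_invRing_algEquiv_suppQuiver l' (Q.toZ β')
  exact ⟨l', Q.toZ β', hadm, hβ'.1.1.2.1, hdynkin, hmin, ⟨φ⟩, ⟨φ.trans ψ⟩⟩


/-- if `β` is an isotropic imaginary root (`p(β) = 1`) in `Σ_λ`, then
some sequence of admissible reflections sends `(λ,β)` to a pair `(λ',β')` where the
support quiver `Q'` of `β'` is extended Dynkin and `β'` is its minimal positive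
imaginary root `δ`; consequently `N(λ,β) ≅ N(λ',δ)`.  (The varieties `N(λ',δ)` for
the restriction of `λ'` to the extended Dynkin support quiver are, by Kronheimer's
work as in [CBH, §8], precisely the deformations of the Kleinian singularity of
type `Q'`; the final clause expresses `N(λ,β)` as such a deformation.) -/
theorem stmt4 (Q : FinQuiver) (K : Type) [Field K] [CharZero K] [IsAlgClosed K]
    (l : Q.I → K) (β : Q.I → ℕ)
    (hβ : Q.toZ β ∈ Q.SigmaSet K l) (hiso : Q.pp (Q.toZ β) = 1) :
    ∃ (l' : Q.I → K) (β' : Q.I → ℤ),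
      Q.AdmEquiv K (l, Q.toZ β) (l', β') ∧ (∀ i, 0 ≤ β' i) ∧
      (Q.suppQuiver β').IsExtDynkin ∧
      (Q.suppQuiver β').IsMinImag (fun i => β' i.1) ∧
      Nonempty (Q.InvRing K l β ≃ₐ[K] Q.InvRing K l' (fun i => (β' i).toNat)) ∧
      Nonempty (Q.InvRing K l β ≃ₐ[K]
        (Q.suppQuiver β').InvRing K (fun i => l' i.1) (fun i => (β' i.1).toNat)) :=
  stmt4_general Q K l β hβ hiso

end
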